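/- Let n ≥ 2 and let Ω be a domain in ℝⁿ. Let 𝔘(Ω) be the set of n-component vector fields u whose components are harmonic in Ω and which satisfy sup_Ω |u| ≤ 1. Suppose a point ξ ∈ ∂Ω can be touched by an interior ball B ⊂ Ω. Then limsup_{x→ξ} sup_{u∈𝔘(Ω)} |x−ξ| · |div u(x)| ≤ D_n, where x ranges over points of the radius of B directed from the center of B to ξ, and D_n = (2 ω_{n−1} / ω_n) ∫₀^{π/2} [1 + n(n−2) cos²θ]^{1/2} sin^{n−2}θ dθ. -/

import Mathlib

open MeasureTheory Real Filter Metric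
open scoped Real RealInnerProductSpace

noncomputable section

/-- `Eu n` is the Euclidean space `ℝⁿ`. -/
abbrev Eu (n : ℕ) := EuclideanSpace ℝ (Fin n)

/-- `ω_n`: the surface area of the unit sphere `S^{n-1}` in `ℝⁿ`,
given by the classical formula `2 π^{n/2} / Γ(n/2)`. -/
def sphereArea (n : ℕ) : ℝ := 2 * π ^ ((n : ℝ) / 2) / Real.Gamma ((n : ℝ) / 2)

/-- A function is harmonic on a set: it is twice continuously differentiable
there and its Laplacian (the sum of the pure second partial derivatives in the
coordinate directions) vanishes at every point of the set. -/
def IsHarmonicOn {n : ℕ} (u : Eu n → ℝ) (Ω : Set (Eu n)) : Prop :=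
  ContDiffOn ℝ 2 u Ω ∧ ∀ x ∈ Ω,
    ∑ i, fderiv ℝ (fun y => fderiv ℝ u y (EuclideanSpace.single i 1)) x
      (EuclideanSpace.single i 1) = 0

/-- The divergence `div u(x) = ∑ⱼ ∂uⱼ/∂xⱼ (x)` of a vector field `u : ℝⁿ → ℝⁿ`. -/
def divg {n : ℕ} (u : Eu n → Eu n) (x : Eu n) : ℝ :=
  ∑ j, fderiv ℝ (fun y => u y j) x (EuclideanSpace.single j 1)

/-- The constant `D_n = (2 ω_{n-1}/ω_n) ∫₀^{π/2} (1 + n(n-2) cos²θ)^{1/2} sin^{n-2}θ dθ`. -/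
def Dconst (n : ℕ) : ℝ :=
  (2 * sphereArea (n - 1) / sphereArea n) *
    ∫ θ in (0:ℝ)..(π / 2),
      Real.sqrt (1 + (n : ℝ) * ((n : ℝ) - 2) * Real.cos θ ^ 2) * Real.sin θ ^ (n - 2)


/-- Partial derivative in coordinate direction `i`. -/
def pd {n : ℕ} (i : Fin n) (f : Eu n → ℝ) (y : Eu n) : ℝ :=
  fderiv ℝ f y (EuclideanSpace.single i 1)

/-- The coordinate Laplacian. -/
def lap {n : ℕ} (f : Eu n → ℝ) (y : Eu n) : ℝ := ∑ i, pd i (pd i f) y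

lemma contDiff_of_tsupport_aux {n : ℕ} {k : WithTop ℕ∞} {f : Eu n → ℝ}
    (hf : ∀ x ∈ tsupport f, ContDiffAt ℝ k f x) : ContDiff ℝ k f := by
  rw [contDiff_iff_contDiffAt]
  intro x
  by_cases hx : x ∈ tsupport f
  · exact hf x hx
  · exact contDiffAt_const.congr_of_eventuallyEq (notMem_tsupport_iff_eventuallyEq.1 hx)

lemma integral_pd_eq_zero {n : ℕ} (i : Fin n) (X : Eu n → ℝ) (hX : ContDiff ℝ 1 X)
    (hc : HasCompactSupport X) : ∫ y, pd i X y = 0 := by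
  have hd : Differentiable ℝ X := hX.differentiable (by norm_num)
  have hcont : Continuous (fun y => fderiv ℝ X y (EuclideanSpace.single i 1)) :=
    (hX.continuous_fderiv (by norm_num)).clm_apply continuous_const
  have hcs : HasCompactSupport (fun y => fderiv ℝ X y (EuclideanSpace.single i 1)) :=
    hc.fderiv_apply (𝕜 := ℝ) _
  have h := integral_mul_fderiv_eq_neg_fderiv_mul_of_integrable (𝕜 := ℝ) (μ := volume)
    (f := fun _ : Eu n => (1:ℝ)) (g := X) (v := EuclideanSpace.single i 1)
    (by simp) (by simpa using hcont.integrable_of_hasCompactSupport hcs)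
    (by simpa using hX.continuous.integrable_of_hasCompactSupport hc)
    (fun x _ => differentiableAt_const _) (fun x _ => hd x)
  simpa [pd] using h

lemma pd_contDiffAt {n : ℕ} (i : Fin n) {f : Eu n → ℝ} {y : Eu n} {k l : WithTop ℕ∞}
    (hf : ContDiffAt ℝ l f y) (h : k + 1 ≤ l) : ContDiffAt ℝ k (pd i f) y := by
  unfold pd
  exact (hf.fderiv_right h).clm_apply contDiffAt_const

lemma pd_mul {n : ℕ} (i : Fin n) {f g : Eu n → ℝ} {y : Eu n}
    (hf : DifferentiableAt ℝ f y) (hg : DifferentiableAt ℝ g y) :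
    pd i (fun z => f z * g z) y = pd i f y * g y + f y * pd i g y := by
  unfold pd
  rw [fderiv_fun_mul hf hg]
  simp; ring

lemma pd_congr {n : ℕ} (i : Fin n) {f g : Eu n → ℝ} {y : Eu n}
    (h : f =ᶠ[nhds y] g) : pd i f y = pd i g y := by
  unfold pd
  rw [h.fderiv_eq]

lemma pd_congr_ev {n : ℕ} (i : Fin n) {f g : Eu n → ℝ} {y : Eu n}
    (h : f =ᶠ[nhds y] g) : pd i f =ᶠ[nhds y] pd i g := by
  filter_upwards [h.eventually_nhds] with z hz
  exact pd_congr i hz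

lemma lap_congr {n : ℕ} {f g : Eu n → ℝ} {y : Eu n}
    (h : f =ᶠ[nhds y] g) : lap f y = lap g y := by
  unfold lap
  exact Finset.sum_congr rfl fun i _ => pd_congr i (pd_congr_ev i h)

lemma lap_mul {n : ℕ} {f g : Eu n → ℝ} {y : Eu n}
    (hf : ContDiffAt ℝ 2 f y) (hg : ContDiffAt ℝ 2 g y) :
    lap (fun z => f z * g z) y
      = f y * lap g y + 2 * (∑ i, pd i f y * pd i g y) + g y * lap f y := by
  unfold lap
  rw [Finset.mul_sum, Finset.mul_sum, Finset.mul_sum, ← Finset.sum_add_distrib,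
    ← Finset.sum_add_distrib]
  refine Finset.sum_congr rfl fun i _ => ?_
  have e : pd i (fun z => f z * g z) =ᶠ[nhds y]
      fun z => pd i f z * g z + f z * pd i g z := by
    filter_upwards [hf.eventually (by simp), hg.eventually (by simp)] with z h1 h2
    exact pd_mul i (h1.differentiableAt (by norm_num)) (h2.differentiableAt (by norm_num))
  rw [pd_congr i e]
  have df := hf.differentiableAt (by norm_num)
  have dg := hg.differentiableAt (by norm_num)
  have df1 := (pd_contDiffAt i (k := 1) hf (by norm_num)).differentiableAt (by norm_num)
  have dg1 := (pd_contDiffAt i (k := 1) hg (by norm_num)).differentiableAt (by norm_num)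
  have : pd i (fun z => pd i f z * g z + f z * pd i g z) y
      = pd i (fun z => pd i f z * g z) y + pd i (fun z => f z * pd i g z) y := by
    have := fderiv_fun_add (df1.fun_mul dg) (df.fun_mul dg1)
    exact congrArg (fun L => L (EuclideanSpace.single i 1)) this
  rw [this, pd_mul i df1 dg, pd_mul i df dg1]
  ring

lemma pd_eq_zero_of_notMem {n : ℕ} (i : Fin n) {f : Eu n → ℝ} {y : Eu n}
    (h : y ∉ tsupport f) : pd i f y = 0 := by
  rw [pd_congr i (notMem_tsupport_iff_eventuallyEq.1 h)]
  simp [pd]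

/-- Integration by parts of a function that is `C¹` on an open set against a test function. -/
lemma integral_mul_pd {n : ℕ} (i : Fin n) (U : Set (Eu n)) (hU : IsOpen U)
    (u φ : Eu n → ℝ) (hu : ContDiffOn ℝ 1 u U) (hφ : ContDiff ℝ 1 φ)
    (hc : HasCompactSupport φ) (hs : tsupport φ ⊆ U) :
    ∫ y, u y * pd i φ y = - ∫ y, φ y * pd i u y := by
  have hX : ContDiff ℝ 1 (fun y => φ y * u y) := by
    apply contDiff_of_tsupport_aux
    intro y hy
    have : y ∈ tsupport φ := tsupport_mul_subset_left hy
    exact hφ.contDiffAt.mul (hu.contDiffAt (hU.mem_nhds (hs this)))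
  have hXc : HasCompactSupport (fun y => φ y * u y) := hc.mul_right
  have h0 := integral_pd_eq_zero i _ hX hXc
  have key : ∀ y, pd i (fun y => φ y * u y) y = pd i φ y * u y + φ y * pd i u y := by
    intro y
    by_cases hy : y ∈ tsupport φ
    · exact pd_mul i (hφ.contDiffAt.differentiableAt (by norm_num))
        ((hu.contDiffAt (hU.mem_nhds (hs hy))).differentiableAt (by norm_num))
    · rw [pd_eq_zero_of_notMem i (fun h => hy (tsupport_mul_subset_left h)),
        pd_eq_zero_of_notMem i hy, image_eq_zero_of_notMem_tsupport hy]
      simp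
  have c1 : Continuous (fun y => pd i φ y * u y) := by
    apply continuous_of_tsupport
    intro y hy
    have : y ∈ tsupport φ := by
      have h1 : y ∈ tsupport (pd i φ) := tsupport_mul_subset_left hy
      have h2 : tsupport (pd i φ) ⊆ tsupport φ := by
        apply closure_minimal _ (isClosed_tsupport _)
        intro z hz
        by_contra h
        exact hz (pd_eq_zero_of_notMem i h)
      exact h2 h1
    exact (pd_contDiffAt i (k := 0) (hφ.contDiffAt (x := y)) (by norm_num)).continuousAt.mul
      (hu.contDiffAt (hU.mem_nhds (hs this))).continuousAt
  have c2 : Continuous (fun y => φ y * pd i u y) := by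
    apply continuous_of_tsupport
    intro y hy
    have : y ∈ tsupport φ := tsupport_mul_subset_left hy
    exact hφ.continuous.continuousAt.mul
      (pd_contDiffAt i (k := 0) (hu.contDiffAt (hU.mem_nhds (hs this))) (by norm_num)).continuousAt
  have s1 : HasCompactSupport (fun y => pd i φ y * u y) :=
    HasCompactSupport.mul_right (hc.fderiv_apply (𝕜 := ℝ) _)
  have s2 : HasCompactSupport (fun y => φ y * pd i u y) := hc.mul_right
  simp_rw [key] at h0
  rw [integral_add (c1.integrable_of_hasCompactSupport s1)
    (c2.integrable_of_hasCompactSupport s2)] at h0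
  simp_rw [mul_comm (u _)]
  linarith

lemma tsupport_pd_subset {n : ℕ} (i : Fin n) (φ : Eu n → ℝ) : tsupport (pd i φ) ⊆ tsupport φ := by
  apply closure_minimal _ (isClosed_tsupport _)
  intro z hz
  by_contra h
  exact hz (pd_eq_zero_of_notMem i h)

lemma hasCompactSupport_pd {n : ℕ} (i : Fin n) {φ : Eu n → ℝ} (h : HasCompactSupport φ) :
    HasCompactSupport (pd i φ) := h.fderiv_apply (𝕜 := ℝ) _

lemma integrable_mul_of_tsupport {n : ℕ} (U : Set (Eu n)) (hU : IsOpen U) (u φ : Eu n → ℝ)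
    (hu : ContinuousOn u U) (hφ : ContinuousOn φ U) (hc : HasCompactSupport φ)
    (hs : tsupport φ ⊆ U) : Integrable (fun y => u y * φ y) := by
  apply Continuous.integrable_of_hasCompactSupport _ hc.mul_left
  apply continuous_of_tsupport
  intro y hy
  have : y ∈ U := hs (tsupport_mul_subset_right hy)
  exact (hu.continuousAt (hU.mem_nhds this)).mul (hφ.continuousAt (hU.mem_nhds this))

/-- Green's identity against a test function. -/
lemma integral_mul_lap {n : ℕ} (U : Set (Eu n)) (hU : IsOpen U)
    (u φ : Eu n → ℝ) (hu : IsHarmonicOn u U) (hφ : ContDiff ℝ 2 φ)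
    (hc : HasCompactSupport φ) (hs : tsupport φ ⊆ U) :
    ∫ y, u y * lap φ y = 0 := by
  have hu1 : ContDiffOn ℝ 1 u U := hu.1.of_le (by norm_num)
  have hpu : ∀ i, ContDiffOn ℝ 1 (pd i u) U := fun i y hy =>
    (pd_contDiffAt i (k := 1) (hu.1.contDiffAt (hU.mem_nhds hy)) (by norm_num)).contDiffWithinAt
  have hpφ : ∀ i, ContDiff ℝ 1 (pd i φ) := fun i => contDiff_iff_contDiffAt.2 fun y =>
    pd_contDiffAt i (k := 1) hφ.contDiffAt (by norm_num)
  have step : ∀ i, ∫ y, u y * pd i (pd i φ) y = ∫ y, φ y * pd i (pd i u) y := by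
    intro i
    rw [integral_mul_pd i U hU u (pd i φ) hu1 (hpφ i) (hasCompactSupport_pd i hc)
      ((tsupport_pd_subset i φ).trans hs)]
    simp_rw [mul_comm (pd i φ _)]
    rw [integral_mul_pd i U hU (pd i u) φ (hpu i) (hφ.of_le (by norm_num)) hc hs]
    simp
  have int1 : ∀ i, Integrable (fun y => u y * pd i (pd i φ) y) := by
    intro i
    refine integrable_mul_of_tsupport U hU _ _ hu.1.continuousOn ?_
      (hasCompactSupport_pd i (hasCompactSupport_pd i hc))
      (((tsupport_pd_subset i _).trans (tsupport_pd_subset i φ)).trans hs)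
    intro y _
    exact (pd_contDiffAt i (k := 0) ((hpφ i).contDiffAt (x := y))
      (by norm_num)).continuousAt.continuousWithinAt
  have int2 : ∀ i, Integrable (fun y => φ y * pd i (pd i u) y) := by
    intro i
    simp_rw [mul_comm (φ _)]
    refine integrable_mul_of_tsupport U hU _ _ ?_ hφ.continuous.continuousOn hc hs
    intro y hy
    exact (pd_contDiffAt i (k := 0) ((hpu i).contDiffAt (hU.mem_nhds hy))
      (by norm_num)).continuousAt.continuousWithinAt
  unfold lap
  simp_rw [Finset.mul_sum]
  rw [integral_finsetSum _ fun i _ => int1 i]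
  simp_rw [step]
  rw [← integral_finsetSum _ fun i _ => int2 i]
  simp_rw [← Finset.mul_sum]
  have : ∀ y, φ y * ∑ i, pd i (pd i u) y = 0 := by
    intro y
    by_cases hy : y ∈ tsupport φ
    · have := hu.2 y (hs hy)
      change (∑ i, pd i (pd i u) y) = 0 at this
      rw [this, mul_zero]
    · rw [image_eq_zero_of_notMem_tsupport hy, zero_mul]
  simp [this]

lemma contDiff_sqd {n : ℕ} {k : WithTop ℕ∞} (a : Eu n) :
    ContDiff ℝ k (fun z : Eu n => ‖z - a‖ ^ 2) :=
  (contDiff_norm_sq ℝ).comp (contDiff_id.sub contDiff_const)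

lemma contDiff_lin {n : ℕ} {k : WithTop ℕ∞} (a w : Eu n) :
    ContDiff ℝ k (fun z : Eu n => ⟪w, z - a⟫) :=
  contDiff_const.inner ℝ (contDiff_id.sub contDiff_const)

lemma pd_rad {n : ℕ} (i : Fin n) (a y : Eu n) {g : ℝ → ℝ} {g' : ℝ}
    (hg : HasDerivAt g g' (‖y - a‖ ^ 2)) :
    pd i (fun z => g (‖z - a‖ ^ 2)) y = g' * (2 * (y i - a i)) := by
  have h1 : HasFDerivAt (fun z : Eu n => ‖z - a‖ ^ 2) _ y :=
    ((hasFDerivAt_id y).sub_const a).norm_sq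
  have h2 := hg.comp_hasFDerivAt y h1
  unfold pd
  have := h2.fderiv
  simp only [Function.comp_def] at this
  rw [this]
  simp [EuclideanSpace.inner_single_right]

lemma pd_lin {n : ℕ} (i : Fin n) (a w y : Eu n) :
    pd i (fun z => ⟪w, z - a⟫) y = w i := by
  have h2 : HasFDerivAt (fun z : Eu n => ⟪w, z - a⟫) (innerSL ℝ w) y := by
    have := ((innerSL ℝ w).hasFDerivAt (x := y - a)).comp y ((hasFDerivAt_id y).sub_const a)
    simpa [Function.comp_def] using this
  unfold pd
  rw [h2.fderiv]
  simp [EuclideanSpace.inner_single_right]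

lemma pd_const {n : ℕ} (i : Fin n) (c : ℝ) (y : Eu n) : pd i (fun _ => c) y = 0 := by
  simp [pd]

lemma lap_lin {n : ℕ} (a w y : Eu n) : lap (fun z => ⟪w, z - a⟫) y = 0 := by
  unfold lap
  refine Finset.sum_eq_zero fun i _ => ?_
  have : pd i (fun z => ⟪w, z - a⟫) = fun _ => w i := by
    ext z; exact pd_lin i a w z
  rw [this, pd_const]

lemma lap_rad {n : ℕ} (a y : Eu n) {g g1 : ℝ → ℝ} {g2 : ℝ}
    (hg : ∀ᶠ q in nhds (‖y - a‖ ^ 2), HasDerivAt g (g1 q) q)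
    (hg1 : HasDerivAt g1 g2 (‖y - a‖ ^ 2)) :
    lap (fun z => g (‖z - a‖ ^ 2)) y = 4 * ‖y - a‖ ^ 2 * g2 + 2 * n * g1 (‖y - a‖ ^ 2) := by
  unfold lap
  have hcont : Tendsto (fun z : Eu n => ‖z - a‖ ^ 2) (nhds y) (nhds (‖y - a‖ ^ 2)) := by
    have : Continuous (fun z : Eu n => ‖z - a‖ ^ 2) := by fun_prop
    exact this.continuousAt
  have key : ∀ i, pd i (pd i (fun z => g (‖z - a‖ ^ 2))) y
      = 4 * g2 * (y i - a i) ^ 2 + 2 * g1 (‖y - a‖ ^ 2) := by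
    intro i
    have e : pd i (fun z => g (‖z - a‖ ^ 2)) =ᶠ[nhds y]
        fun z => g1 (‖z - a‖ ^ 2) * ⟪EuclideanSpace.single i (2:ℝ), z - a⟫ := by
      filter_upwards [hcont.eventually hg] with z hz
      rw [pd_rad i a z hz]
      simp [EuclideanSpace.inner_single_left]
    rw [pd_congr i e, pd_mul, pd_rad i a y hg1, pd_lin]
    · simp [EuclideanSpace.inner_single_left]; ring
    · exact (DifferentiableAt.comp (g := g1) y hg1.differentiableAt
        ((contDiff_sqd (k := 1) a).differentiable (by norm_num) y))
    · exact (contDiff_lin (k := 1) a _).differentiable (by norm_num) y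
  simp_rw [key]
  rw [Finset.sum_add_distrib, ← Finset.mul_sum, EuclideanSpace.norm_sq_eq]
  simp
  ring

lemma lap_rad_lin {n : ℕ} (a w y : Eu n) {g g1 : ℝ → ℝ} {g2 : ℝ}
    (hc : ContDiffAt ℝ 2 g (‖y - a‖ ^ 2))
    (hg : ∀ᶠ q in nhds (‖y - a‖ ^ 2), HasDerivAt g (g1 q) q)
    (hg1 : HasDerivAt g1 g2 (‖y - a‖ ^ 2)) :
    lap (fun z => g (‖z - a‖ ^ 2) * ⟪w, z - a⟫) y
      = ⟪w, y - a⟫ * (4 * ‖y - a‖ ^ 2 * g2 + (2 * n + 4) * g1 (‖y - a‖ ^ 2)) := by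
  have c1 : ContDiffAt ℝ 2 (fun z : Eu n => ‖z - a‖ ^ 2) y := (contDiff_sqd a).contDiffAt
  rw [lap_mul (f := fun z => g (‖z - a‖ ^ 2)) (g := fun z => ⟪w, z - a⟫)
    (ContDiffAt.comp y hc c1) (contDiff_lin a w).contDiffAt, lap_lin, lap_rad a y hg hg1]
  have : ∑ i, pd i (fun z => g (‖z - a‖ ^ 2)) y * pd i (fun z => ⟪w, z - a⟫) y
      = 2 * g1 (‖y - a‖ ^ 2) * ⟪w, y - a⟫ := by
    simp_rw [pd_rad _ a y hg.self_of_nhds, pd_lin]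
    rw [PiLp.inner_apply, Finset.mul_sum]
    refine Finset.sum_congr rfl fun i _ => ?_
    simp; ring
  rw [this]
  ring

/-- Existence of the regularised radial profile. -/
lemma exists_profile (n : ℕ) (s : ℝ) (hs : 0 < s) :
    ∃ g : ℝ → ℝ, ContDiff ℝ 3 g ∧ (∀ q, s ^ 2 ≤ q → g q = q ^ (-(n:ℝ) / 2)) ∧
      ∀ q, 0 ≤ q → 0 ≤ n * g q + 2 * q * deriv g q := by
  set k : ℝ → ℝ := fun q => Real.smoothTransition (2 * q / s ^ 2 - 1) with hk
  have hkc : ContDiff ℝ 3 k :=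
    (Real.smoothTransition.contDiff (n := 3)).comp (by fun_prop)
  have hkmono : Monotone k := by
    intro x y hxy
    apply Real.smoothTransition.monotone
    gcongr
  have s2 : 0 < s ^ 2 := by positivity
  have hk0 : ∀ q, q ≤ s ^ 2 / 2 → k q = 0 := by
    intro q hq
    apply Real.smoothTransition.zero_of_nonpos
    have : 2 * q / s ^ 2 ≤ 1 := by rw [div_le_one s2]; linarith
    linarith
  have hk1 : ∀ q, s ^ 2 ≤ q → k q = 1 := by
    intro q hq
    apply Real.smoothTransition.one_of_one_le
    have : 2 ≤ 2 * q / s ^ 2 := by rw [le_div_iff₀ s2]; linarith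
    linarith
  have hz : ∀ q, q < s ^ 2 / 2 → (fun q => k q * q ^ (-(n:ℝ) / 2)) =ᶠ[nhds q] fun _ => 0 := by
    intro q hq
    filter_upwards [Iio_mem_nhds hq] with r hr
    rw [hk0 r (le_of_lt hr), zero_mul]
  refine ⟨fun q => k q * q ^ (-(n:ℝ) / 2), ?_, ?_, ?_⟩
  · rw [contDiff_iff_contDiffAt]
    intro q
    by_cases hq : q < s ^ 2 / 2
    · exact contDiffAt_const.congr_of_eventuallyEq (hz q hq)
    · have : q ≠ 0 := by intro h; apply hq; rw [h]; positivity
      exact hkc.contDiffAt.mul (Real.contDiffAt_rpow_const_of_ne this)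
  · intro q hq
    simp [hk1 q hq]
  · intro q hq0
    by_cases hq : q < s ^ 2 / 2
    · rw [(hz q hq).deriv_eq]
      simp [hk0 q hq.le]
    · have hq' : 0 < q := lt_of_lt_of_le (by positivity) (not_lt.1 hq)
      have hd : HasDerivAt (fun q => k q * q ^ (-(n:ℝ) / 2)) _ q :=
        ((hkc.differentiable (by norm_num) q).hasDerivAt).mul
          (Real.hasDerivAt_rpow_const (p := -(n:ℝ) / 2) (Or.inl hq'.ne'))
      rw [hd.deriv]
      have e : q ^ (-(n:ℝ) / 2 - 1) = q ^ (-(n:ℝ) / 2) / q := by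
        rw [Real.rpow_sub hq', Real.rpow_one]
      rw [e]
      have : (n:ℝ) * (k q * q ^ (-(n:ℝ) / 2)) + 2 * q * (deriv k q * q ^ (-(n:ℝ) / 2)
          + k q * (-(n:ℝ) / 2 * (q ^ (-(n:ℝ) / 2) / q)))
          = 2 * q * deriv k q * q ^ (-(n:ℝ) / 2) := by
        field_simp; ring
      rw [this]
      have := hkmono.deriv_nonneg (x := q)
      positivity

lemma sphereArea_eq {n : ℕ} (hn : 1 ≤ n) :
    (n : ℝ) * (volume : Measure (Eu n)).real (ball 0 1) = sphereArea n := by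
  have : Nonempty (Fin n) := ⟨⟨0, hn⟩⟩
  rw [measureReal_def, EuclideanSpace.volume_ball]
  have hn0 : (0:ℝ) < n := by exact_mod_cast hn
  have hG : 0 < Real.Gamma ((n:ℝ) / 2) := Real.Gamma_pos_of_pos (by positivity)
  rw [sphereArea, Fintype.card_fin]
  simp only [ENNReal.ofReal_one, one_pow, one_mul]
  rw [ENNReal.toReal_ofReal]
  · rw [Real.Gamma_add_one (by positivity), Real.sqrt_eq_rpow, ← Real.rpow_natCast,
      ← Real.rpow_mul Real.pi_pos.le]
    have : (1 / 2 * (n:ℝ)) = n / 2 := by ring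
    rw [this]
    field_simp
  · have := Real.Gamma_pos_of_pos (s := (n:ℝ) / 2 + 1) (by positivity)
    positivity

lemma sphereArea_pos {n : ℕ} (hn : 1 ≤ n) : 0 < sphereArea n := by
  have hn0 : (0:ℝ) < n := by exact_mod_cast hn
  have hG : 0 < Real.Gamma ((n:ℝ) / 2) := Real.Gamma_pos_of_pos (by positivity)
  unfold sphereArea
  positivity

/-- Total mass of the regularised charge. -/
lemma integral_charge {n : ℕ} (hn : 1 ≤ n) (a : Eu n) (s : ℝ) (hs : 0 < s) (g : ℝ → ℝ)
    (hg : ContDiff ℝ 3 g) (hgs : ∀ q, s ^ 2 ≤ q → g q = q ^ (-(n:ℝ) / 2)) :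
    ∫ y : Eu n, (n * g (‖y - a‖ ^ 2) + 2 * ‖y - a‖ ^ 2 * deriv g (‖y - a‖ ^ 2))
      = sphereArea n := by
  have : Nonempty (Fin n) := ⟨⟨0, hn⟩⟩
  have : Nontrivial (Eu n) := inferInstance
  rw [integral_sub_right_eq_self
    (fun y : Eu n => n * g (‖y‖ ^ 2) + 2 * ‖y‖ ^ 2 * deriv g (‖y‖ ^ 2)) a]
  rw [integral_fun_norm_addHaar volume (fun r => n * g (r ^ 2) + 2 * r ^ 2 * deriv g (r ^ 2))]
  have hfr : Module.finrank ℝ (Eu n) = n := by simp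
  rw [hfr]
  have hz : ∀ q, s ^ 2 < q → n * g q + 2 * q * deriv g q = 0 := by
    intro q hq
    have hq' : 0 < q := lt_trans (by positivity) hq
    have e : g =ᶠ[nhds q] fun q => q ^ (-(n:ℝ) / 2) := by
      filter_upwards [Ioi_mem_nhds hq] with r hr
      exact hgs r (le_of_lt hr)
    rw [e.deriv_eq, e.self_of_nhds,
      (Real.hasDerivAt_rpow_const (p := -(n:ℝ) / 2) (Or.inl hq'.ne')).deriv,
      Real.rpow_sub hq', Real.rpow_one]
    field_simp; ring
  have key : ∫ r in Set.Ioi (0:ℝ), r ^ (n - 1) • (n * g (r ^ 2) + 2 * r ^ 2 * deriv g (r ^ 2))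
      = 1 := by
    have hsplit : ∫ r in Set.Ioi (0:ℝ), r ^ (n - 1) •
          (n * g (r ^ 2) + 2 * r ^ 2 * deriv g (r ^ 2))
        = ∫ r in Set.Ioc (0:ℝ) s, r ^ (n - 1) •
          (n * g (r ^ 2) + 2 * r ^ 2 * deriv g (r ^ 2)) := by
      apply setIntegral_eq_of_subset_of_forall_sdiff_eq_zero measurableSet_Ioi
        Set.Ioc_subset_Ioi_self
      intro x hx
      have h1 : s < x := by
        by_contra h
        exact hx.2 ⟨hx.1, not_lt.1 h⟩
      rw [hz (x ^ 2) (by gcongr), smul_zero]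
    rw [hsplit, ← intervalIntegral.integral_of_le hs.le]
    have hF : ∀ r ∈ Set.uIcc 0 s, HasDerivAt (fun r => r ^ n * g (r ^ 2))
        (r ^ (n - 1) • (n * g (r ^ 2) + 2 * r ^ 2 * deriv g (r ^ 2))) r := by
      intro r _
      have h1 : HasDerivAt g (deriv g (r ^ 2)) (r ^ 2) :=
        (hg.differentiable (by norm_num) _).hasDerivAt
      have h2 := (hasDerivAt_pow n r).mul (HasDerivAt.comp (h₂ := g) (h := fun r => r ^ 2) r h1 (hasDerivAt_pow 2 r))
      refine h2.congr_deriv ?_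
      obtain ⟨m, rfl⟩ : ∃ m, n = m + 1 := ⟨n - 1, by omega⟩
      simp
      ring
    rw [intervalIntegral.integral_eq_sub_of_hasDerivAt hF]
    · rw [hgs _ le_rfl]
      have : (s ^ 2) ^ (-(n:ℝ) / 2) = (s ^ n)⁻¹ := by
        rw [← Real.rpow_natCast s 2, ← Real.rpow_mul hs.le, ← Real.rpow_natCast s n,
          ← Real.rpow_neg hs.le]
        congr 1
        push_cast; ring
      rw [this, mul_inv_cancel₀ (by positivity), zero_pow (by omega)]
      simp
    · have hdc : Continuous (deriv g) := hg.continuous_deriv (by norm_num)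
      have hgc := hg.continuous
      apply Continuous.intervalIntegrable
      fun_prop
  rw [key, ← sphereArea_eq hn]
  simp

/-- Reflection in the hyperplane orthogonal to `ν` as a continuous linear map. -/
def reflL {n : ℕ} (ν : Eu n) : Eu n →L[ℝ] Eu n :=
  ContinuousLinearMap.id ℝ (Eu n) - (2:ℝ) • (innerSL ℝ ν).smulRight ν

lemma reflL_apply {n : ℕ} (ν w : Eu n) : reflL ν w = w - (2 * ⟪ν, w⟫) • ν := by
  simp [reflL, smul_smul]

/-- The Newtonian gradient field. -/
def Vf {n : ℕ} (z : Eu n) : Eu n := (‖z‖ ^ 2) ^ (-(n:ℝ) / 2) • z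

/-- Derivative of `Vf`. -/
def dV {n : ℕ} (z : Eu n) : Eu n →L[ℝ] Eu n :=
  ((‖z‖ ^ 2) ^ (-(n:ℝ) / 2)) • ContinuousLinearMap.id ℝ (Eu n)
    - (n * (‖z‖ ^ 2) ^ (-(n:ℝ) / 2 - 1)) • (innerSL ℝ z).smulRight z

lemma dV_apply {n : ℕ} (z h : Eu n) : dV z h =
    ((‖z‖ ^ 2) ^ (-(n:ℝ) / 2)) • h - (n * (‖z‖ ^ 2) ^ (-(n:ℝ) / 2 - 1) * ⟪z, h⟫) • z := by
  simp [dV, smul_smul]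

lemma hasFDerivAt_Vf {n : ℕ} {z : Eu n} (hz : z ≠ 0) : HasFDerivAt Vf (dV z) z := by
  have hq : ‖z‖ ^ 2 ≠ 0 := by positivity
  have h1 : HasFDerivAt (fun z : Eu n => ‖z‖ ^ 2) _ z := (hasFDerivAt_id z).norm_sq
  have h2 := HasDerivAt.comp_hasFDerivAt z
    (Real.hasDerivAt_rpow_const (p := -(n:ℝ) / 2) (Or.inl hq)) h1
  have h3 := h2.smul (hasFDerivAt_id z)
  refine h3.congr_fderiv ?_
  ext1 h
  rw [dV_apply]
  simp only [Function.comp_apply, id_eq, add_apply,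
    smul_apply, ContinuousLinearMap.id_apply, 
    ContinuousLinearMap.smulRight_apply, ContinuousLinearMap.comp_apply, smul_eq_mul,
    innerSL_apply_apply]
  rw [sub_eq_add_neg ((‖z‖ ^ 2) ^ (-(n:ℝ) / 2) • h), ← neg_smul]
  congr 2
  rw [nsmul_eq_mul]
  push_cast
  ring

/-- The gradient of the Green function of the half-space with pole `ν`. -/
def Wf {n : ℕ} (ν y : Eu n) : Eu n := -Vf (y - ν) + reflL ν (Vf (y + ν))

/-- Derivative of `Wf`. -/
def dW {n : ℕ} (ν y : Eu n) : Eu n →L[ℝ] Eu n :=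
  -dV (y - ν) + (reflL ν).comp (dV (y + ν))

lemma hasFDerivAt_Wf {n : ℕ} {ν y : Eu n} (h1 : y - ν ≠ 0) (h2 : y + ν ≠ 0) :
    HasFDerivAt (Wf ν) (dW ν y) y := by
  have a1 : HasFDerivAt (fun y => Vf (y - ν)) (dV (y - ν)) y := by
    simpa [Function.comp_def] using (hasFDerivAt_Vf h1).comp y ((hasFDerivAt_id y).sub_const ν)
  have a2 : HasFDerivAt (fun y => Vf (y + ν)) (dV (y + ν)) y := by
    simpa [Function.comp_def] using (hasFDerivAt_Vf h2).comp y ((hasFDerivAt_id y).add_const ν)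
  exact a1.neg.add ((reflL ν).hasFDerivAt.comp y a2)

/-- The gradient vector in coordinates. -/
def gradv {n : ℕ} (m : Eu n → ℝ) (y : Eu n) : Eu n := WithLp.toLp 2 (fun i => pd i m y)

lemma gradv_eq_sum {n : ℕ} (m : Eu n → ℝ) (y : Eu n) :
    gradv m y = ∑ i, pd i m y • EuclideanSpace.single i (1:ℝ) := by
  ext j
  simp [gradv, Finset.sum_apply, Pi.single_apply]

/-- The remainder field. -/
def Rest {n : ℕ} (ν : Eu n) (m : Eu n → ℝ) (y : Eu n) : Eu n :=
  (2:ℝ) • dW ν y (gradv m y) + lap m y • Wf ν y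

lemma pd_Wf {n : ℕ} {ν y : Eu n} (h1 : y - ν ≠ 0) (h2 : y + ν ≠ 0) (i j : Fin n) :
    pd i (fun z => Wf ν z j) y = (dW ν y (EuclideanSpace.single i 1)) j := by
  unfold pd
  have h := (EuclideanSpace.proj (𝕜 := ℝ) j).hasFDerivAt.comp y (hasFDerivAt_Wf h1 h2)
  have h' : HasFDerivAt (fun z => Wf ν z j) ((EuclideanSpace.proj (𝕜 := ℝ) j).comp (dW ν y)) y := h
  rw [h'.fderiv]
  rfl

lemma sum_pd_Wf {n : ℕ} {ν y : Eu n} (h1 : y - ν ≠ 0) (h2 : y + ν ≠ 0) (m : Eu n → ℝ)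
    (j : Fin n) :
    ∑ i, pd i m y * pd i (fun z => Wf ν z j) y = (dW ν y (gradv m y)) j := by
  rw [gradv_eq_sum, map_sum]
  simp_rw [pd_Wf h1 h2]
  simp

lemma lap_add {n : ℕ} {f g : Eu n → ℝ} {y : Eu n}
    (hf : ContDiffAt ℝ 2 f y) (hg : ContDiffAt ℝ 2 g y) :
    lap (fun z => f z + g z) y = lap f y + lap g y := by
  unfold lap
  rw [← Finset.sum_add_distrib]
  refine Finset.sum_congr rfl fun i _ => ?_
  have e : pd i (fun z => f z + g z) =ᶠ[nhds y] fun z => pd i f z + pd i g z := by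
    filter_upwards [hf.eventually (by simp), hg.eventually (by simp)] with z h1 h2
    have := fderiv_fun_add (h1.differentiableAt (by norm_num)) (h2.differentiableAt (by norm_num))
    exact congrArg (fun L => L (EuclideanSpace.single i 1)) this
  rw [pd_congr i e]
  have df1 := (pd_contDiffAt i (k := 1) hf (by norm_num)).differentiableAt (by norm_num)
  have dg1 := (pd_contDiffAt i (k := 1) hg (by norm_num)).differentiableAt (by norm_num)
  exact congrArg (fun L => L (EuclideanSpace.single i 1)) (fderiv_fun_add df1 dg1)

lemma reflL_comp {n : ℕ} (ν w : Eu n) (j : Fin n) :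
    (reflL ν w) j = ⟪reflL ν (EuclideanSpace.single j 1), w⟫ := by
  rw [reflL_apply, reflL_apply, inner_sub_left, inner_smul_left]
  simp [EuclideanSpace.inner_single_right, EuclideanSpace.inner_single_left]
  ring

lemma add_ne_zero_of_pos {n : ℕ} {ν y : Eu n} (hν : ‖ν‖ = 1) (hy : 0 < ⟪ν, y⟫) : y + ν ≠ 0 := by
  intro h
  have : ⟪ν, y + ν⟫ = 0 := by rw [h, inner_zero_right]
  rw [inner_add_right, real_inner_self_eq_norm_sq, hν] at this
  linarith

lemma lap_image {n : ℕ} {ν y w : Eu n} (h : y + ν ≠ 0) :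
    lap (fun z => (‖z + ν‖ ^ 2) ^ (-(n:ℝ) / 2) * ⟪w, z + ν⟫) y = 0 := by
  have hq : 0 < ‖y + ν‖ ^ 2 := by positivity
  have h' := lap_rad_lin (-ν) w y (g := fun q => q ^ (-(n:ℝ) / 2))
    (g1 := fun q => (-(n:ℝ) / 2) * q ^ (-(n:ℝ) / 2 - 1))
    (g2 := (-(n:ℝ) / 2) * ((-(n:ℝ) / 2 - 1) * (‖y + ν‖ ^ 2) ^ (-(n:ℝ) / 2 - 1 - 1)))
  simp only [sub_neg_eq_add] at h'
  rw [h' (Real.contDiffAt_rpow_const_of_ne hq.ne')]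
  · rw [Real.rpow_sub hq (-(n:ℝ) / 2 - 1) 1, Real.rpow_one]
    field_simp
    ring
  · filter_upwards [Ioi_mem_nhds hq] with q hq'
    exact Real.hasDerivAt_rpow_const (Or.inl (ne_of_gt hq'))
  · exact (Real.hasDerivAt_rpow_const (Or.inl hq.ne')).const_mul _

lemma contDiffAt_image {n : ℕ} {ν y w : Eu n} (h : y + ν ≠ 0) {k : WithTop ℕ∞} :
    ContDiffAt ℝ k (fun z => (‖z + ν‖ ^ 2) ^ (-(n:ℝ) / 2) * ⟪w, z + ν⟫) y := by
  have hq : ‖y + ν‖ ^ 2 ≠ 0 := by positivity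
  have a1 : ContDiffAt ℝ k (fun z : Eu n => ‖z + ν‖ ^ 2) y := by
    simpa using (contDiff_sqd (k := k) (-ν)).contDiffAt (x := y)
  have a2 : ContDiffAt ℝ k (fun z : Eu n => ⟪w, z + ν⟫) y := by
    simpa using (contDiff_lin (k := k) (-ν) w).contDiffAt (x := y)
  exact (a1.rpow_const_of_ne hq).mul a2

section reg

variable {n : ℕ} (ν : Eu n) (g : ℝ → ℝ)

/-- Regularised charge. -/
def rho (y : Eu n) : ℝ := n * g (‖y - ν‖ ^ 2) + 2 * ‖y - ν‖ ^ 2 * deriv g (‖y - ν‖ ^ 2)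

/-- Regularised field component. -/
def Ws (j : Fin n) (y : Eu n) : ℝ :=
  g (‖y - ν‖ ^ 2) * ⟪-EuclideanSpace.single j 1, y - ν⟫
    + (‖y + ν‖ ^ 2) ^ (-(n:ℝ) / 2) * ⟪reflL ν (EuclideanSpace.single j 1), y + ν⟫

variable {g}

lemma rho_contDiff (hg : ContDiff ℝ 3 g) : ContDiff ℝ 2 (rho ν g) := by
  have h1 : ContDiff ℝ 2 (deriv g) := hg.deriv' 
  have h2 : ContDiff ℝ 2 (fun z : Eu n => ‖z - ν‖ ^ 2) := contDiff_sqd ν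
  have h3 : ContDiff ℝ 2 g := hg.of_le (by norm_num)
  exact (contDiff_const.mul (h3.comp h2)).add ((contDiff_const.mul h2).mul (h1.comp h2))

lemma rho_eq_zero {s : ℝ} (hs : 0 < s) (hgs : ∀ q, s ^ 2 ≤ q → g q = q ^ (-(n:ℝ) / 2))
    {y : Eu n} (hy : s < ‖y - ν‖) : rho ν g y = 0 := by
  have hq : s ^ 2 < ‖y - ν‖ ^ 2 := by gcongr
  have hq' : 0 < ‖y - ν‖ ^ 2 := lt_trans (by positivity) hq
  unfold rho
  generalize ‖y - ν‖ ^ 2 = q at *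
  have e : g =ᶠ[nhds q] fun q => q ^ (-(n:ℝ) / 2) := by
    filter_upwards [Ioi_mem_nhds hq] with r hr
    exact hgs r (le_of_lt hr)
  rw [e.deriv_eq, e.self_of_nhds,
    (Real.hasDerivAt_rpow_const (p := -(n:ℝ) / 2) (Or.inl hq'.ne')).deriv,
    Real.rpow_sub hq', Real.rpow_one]
  field_simp; ring

lemma rho_tsupport {s : ℝ} (hs : 0 < s) (hgs : ∀ q, s ^ 2 ≤ q → g q = q ^ (-(n:ℝ) / 2)) :
    tsupport (rho ν g) ⊆ closedBall ν s := by
  apply closure_minimal _ isClosed_closedBall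
  intro y hy
  by_contra h
  rw [mem_closedBall, dist_eq_norm, not_le] at h
  exact hy (rho_eq_zero ν hs hgs h)

lemma lap_main (hg : ContDiff ℝ 3 g) (j : Fin n) (y : Eu n) :
    lap (fun z => g (‖z - ν‖ ^ 2) * ⟪-EuclideanSpace.single j 1, z - ν⟫) y
      = - pd j (rho ν g) y := by
  have hd : ∀ q, HasDerivAt g (deriv g q) q := fun q =>
    (hg.differentiable (by norm_num) q).hasDerivAt
  have h1 : ContDiff ℝ 2 (deriv g) := hg.deriv'
  have hd2 : ∀ q, HasDerivAt (deriv g) (deriv (deriv g) q) q := fun q =>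
    (h1.differentiable (by norm_num) q).hasDerivAt
  rw [lap_rad_lin ν _ y (hg.of_le (by norm_num)).contDiffAt (Eventually.of_forall hd) (hd2 _)]
  have hh : HasDerivAt (fun q => n * g q + 2 * q * deriv g q)
      (n * deriv g (‖y - ν‖ ^ 2) + (2 * deriv g (‖y - ν‖ ^ 2)
        + 2 * ‖y - ν‖ ^ 2 * deriv (deriv g) (‖y - ν‖ ^ 2))) (‖y - ν‖ ^ 2) := by
    have := ((hd (‖y - ν‖ ^ 2)).const_mul (n:ℝ)).add
      (((hasDerivAt_id (‖y - ν‖ ^ 2)).const_mul 2).mul (hd2 (‖y - ν‖ ^ 2)))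
    refine (this.congr_deriv (by simp)).congr_of_eventuallyEq (Eventually.of_forall fun q => ?_)
    simp
  have := pd_rad j ν y hh
  change _ = - pd j (fun z => n * g (‖z - ν‖ ^ 2) + 2 * ‖z - ν‖ ^ 2 * deriv g (‖z - ν‖ ^ 2)) y
  rw [this]
  simp [EuclideanSpace.inner_single_left]
  ring

lemma Ws_eq_Wf {s : ℝ} (hs : 0 < s) (hgs : ∀ q, s ^ 2 ≤ q → g q = q ^ (-(n:ℝ) / 2))
    {y : Eu n} (hy : s < ‖y - ν‖) (j : Fin n) : Ws ν g j y = Wf ν y j := by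
  have hq : s ^ 2 ≤ ‖y - ν‖ ^ 2 := by gcongr
  unfold Ws Wf
  rw [hgs _ hq, PiLp.add_apply, reflL_comp]
  rw [Vf, Vf, inner_smul_right]
  simp [EuclideanSpace.inner_single_left, -smul_add]
  ring

lemma Ws_contDiffAt (hg : ContDiff ℝ 3 g) (j : Fin n) {y : Eu n} (h : y + ν ≠ 0) :
    ContDiffAt ℝ 2 (Ws ν g j) y := by
  have h3 : ContDiff ℝ 2 g := hg.of_le (by norm_num)
  exact ((h3.comp (contDiff_sqd ν)).mul (contDiff_lin ν _)).contDiffAt.add (contDiffAt_image h)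

lemma lap_Ws (hg : ContDiff ℝ 3 g) (j : Fin n) {y : Eu n} (h : y + ν ≠ 0) :
    lap (Ws ν g j) y = - pd j (rho ν g) y := by
  have h3 : ContDiff ℝ 2 g := hg.of_le (by norm_num)
  have := lap_add (f := fun z => g (‖z - ν‖ ^ 2) * ⟪-EuclideanSpace.single j 1, z - ν⟫)
    (((h3.comp (contDiff_sqd ν)).mul (contDiff_lin ν _)).contDiffAt (x := y))
    (contDiffAt_image (w := reflL ν (EuclideanSpace.single j 1)) h)
  rw [lap_image h, add_zero, lap_main ν hg] at this
  exact this

lemma lap_test (hν : ‖ν‖ = 1) {s : ℝ} (hs : 0 < s) (hs2 : s < 1 / 2) (hg : ContDiff ℝ 3 g)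
    (hgs : ∀ q, s ^ 2 ≤ q → g q = q ^ (-(n:ℝ) / 2))
    {m : Eu n → ℝ} (hm : ContDiff ℝ 2 m) (hmp : ∀ y ∈ tsupport m, 0 < ⟪ν, y⟫)
    (hm1 : ∀ y ∈ ball ν (1 / 2), m y = 1) (j : Fin n) (y : Eu n) :
    lap (fun z => m z * Ws ν g j z) y = - pd j (rho ν g) y + Rest ν m y j := by
  have hR : Rest ν m y j = 2 * (dW ν y (gradv m y)) j + lap m y * Wf ν y j := by
    simp [Rest]
  by_cases hy : y ∈ tsupport m
  · have hne := add_ne_zero_of_pos hν (hmp y hy)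
    rw [lap_mul hm.contDiffAt (Ws_contDiffAt ν hg j hne), lap_Ws ν hg j hne]
    by_cases hb : y ∈ ball ν (1 / 2)
    · have e : m =ᶠ[nhds y] fun _ => 1 := by
        filter_upwards [isOpen_ball.mem_nhds hb] with z hz
        exact hm1 z hz
      have p0 : ∀ i, pd i m y = 0 := fun i => by rw [pd_congr i e, pd_const]
      have l0 : lap m y = 0 := by
        rw [lap_congr e]
        unfold lap
        refine Finset.sum_eq_zero fun i _ => ?_
        have : pd i (fun _ : Eu n => (1:ℝ)) = fun _ => 0 := by ext z; exact pd_const i 1 z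
        rw [this, pd_const]
      have g0 : gradv m y = 0 := by ext i; simp [gradv, p0]
      rw [hR, g0, l0, hm1 y hb]
      simp [p0]
    · have hb' : 1 / 2 ≤ ‖y - ν‖ := by
        simpa [dist_eq_norm] using hb
      have hlt : s < ‖y - ν‖ := lt_of_lt_of_le hs2 hb'
      have hne2 : y - ν ≠ 0 := by
        intro h; rw [h, norm_zero] at hlt; linarith
      have e : Ws ν g j =ᶠ[nhds y] fun z => Wf ν z j := by
        have : {z : Eu n | s < ‖z - ν‖} ∈ nhds y :=
          (isOpen_lt continuous_const (by fun_prop)).mem_nhds hlt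
        filter_upwards [this] with z hz
        exact Ws_eq_Wf ν hs hgs hz j
      have r0 : pd j (rho ν g) y = 0 := by
        apply pd_eq_zero_of_notMem
        intro h
        have := rho_tsupport ν hs hgs h
        rw [mem_closedBall, dist_eq_norm] at this
        linarith
      rw [hR, ← sum_pd_Wf hne2 hne, e.self_of_nhds, r0]
      simp_rw [pd_congr _ e]
      ring
  · have e : m =ᶠ[nhds y] fun _ => 0 := notMem_tsupport_iff_eventuallyEq.1 hy
    have e2 : (fun z => m z * Ws ν g j z) =ᶠ[nhds y] fun _ => 0 := by
      filter_upwards [e] with z hz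
      rw [hz, zero_mul]
    have c0 : lap (fun _ : Eu n => (0:ℝ)) y = 0 := by
      unfold lap
      refine Finset.sum_eq_zero fun i _ => ?_
      have : pd i (fun _ : Eu n => (0:ℝ)) = fun _ => 0 := by ext z; exact pd_const i 0 z
      rw [this, pd_const]
    have p0 : ∀ i, pd i m y = 0 := fun i => by rw [pd_congr i e, pd_const]
    have g0 : gradv m y = 0 := by ext i; simp [gradv, p0]
    have r0 : pd j (rho ν g) y = 0 := by
      apply pd_eq_zero_of_notMem
      intro h
      apply hy
      have h1 := rho_tsupport ν hs hgs h
      have h2 : y ∈ ball ν (1 / 2) := closedBall_subset_ball hs2 h1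
      apply subset_tsupport
      rw [Function.mem_support, hm1 y h2]
      norm_num
    rw [lap_congr e2, c0, r0, hR, g0, lap_congr e, c0]
    simp

end reg

lemma lap_continuous {n : ℕ} {φ : Eu n → ℝ} (h : ContDiff ℝ 2 φ) : Continuous (lap φ) := by
  unfold lap
  refine continuous_finsetSum _ fun i _ => ?_
  have h1 : ContDiff ℝ 1 (pd i φ) := contDiff_iff_contDiffAt.2 fun y =>
    pd_contDiffAt i (k := 1) h.contDiffAt (by norm_num)
  have h2 : ContDiff ℝ 0 (pd i (pd i φ)) := contDiff_iff_contDiffAt.2 fun y =>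
    pd_contDiffAt i (k := 0) h1.contDiffAt (by norm_num)
  exact h2.continuous

lemma pd_continuous {n : ℕ} (i : Fin n) {φ : Eu n → ℝ} (h : ContDiff ℝ 1 φ) :
    Continuous (pd i φ) := by
  have h2 : ContDiff ℝ 0 (pd i φ) := contDiff_iff_contDiffAt.2 fun y =>
    pd_contDiffAt i (k := 0) h.contDiffAt (by norm_num)
  exact h2.continuous

lemma lap_eq_zero_of_notMem {n : ℕ} {f : Eu n → ℝ} {y : Eu n}
    (h : y ∉ tsupport f) : lap f y = 0 := by
  unfold lap
  refine Finset.sum_eq_zero fun i _ => ?_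
  exact pd_eq_zero_of_notMem i (fun h' => h (tsupport_pd_subset i f h'))

lemma tsupport_lap_subset {n : ℕ} (φ : Eu n → ℝ) : tsupport (lap φ) ⊆ tsupport φ := by
  apply closure_minimal _ (isClosed_tsupport _)
  intro z hz
  by_contra h
  exact hz (lap_eq_zero_of_notMem h)

lemma Rest_eq_zero {n : ℕ} (ν : Eu n) {m : Eu n → ℝ} {y : Eu n} (h : y ∉ tsupport m) :
    Rest ν m y = 0 := by
  have g0 : gradv m y = 0 := by
    ext i
    simp [gradv, pd_eq_zero_of_notMem i h]
  rw [Rest, g0, lap_eq_zero_of_notMem h]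
  simp

/-- Approximate identity step. -/
lemma repr_bound_aux {n : ℕ} (hn : 2 ≤ n) (ν : Eu n) (hν : ‖ν‖ = 1) (U : Set (Eu n))
    (hU : IsOpen U) (m : Eu n → ℝ) (hm : ContDiff ℝ 2 m) (hmc : HasCompactSupport m)
    (hmU : tsupport m ⊆ U) (hmp : ∀ y ∈ tsupport m, 0 < ⟪ν, y⟫)
    (hm1 : ∀ y ∈ ball ν (1 / 2), m y = 1)
    (v : Eu n → Eu n) (hv : ∀ j, IsHarmonicOn (fun y => v y j) U) (hv1 : ∀ y ∈ U, ‖v y‖ ≤ 1)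
    (s : ℝ) (hs : 0 < s) (hs2 : s < 1 / 2) (g : ℝ → ℝ) (hg : ContDiff ℝ 3 g)
    (hgs : ∀ q, s ^ 2 ≤ q → g q = q ^ (-(n:ℝ) / 2)) :
    Integrable (fun y => ‖Rest ν m y‖) ∧
    Integrable (fun y => rho ν g y * divg v y) ∧ 
    |∫ y, rho ν g y * divg v y| ≤ ∫ y, ‖Rest ν m y‖ := by
  have hρ2 := rho_contDiff ν hg
  have hρ1 : ContDiff ℝ 1 (rho ν g) := hρ2.of_le (by norm_num)
  have hρs := rho_tsupport (n := n) ν hs hgs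
  have hρc : HasCompactSupport (rho ν g) :=
    (isCompact_closedBall ν s).of_isClosed_subset (isClosed_tsupport _) hρs
  have hball : ball ν (1 / 2) ⊆ tsupport m := by
    intro y hy
    apply subset_tsupport
    rw [Function.mem_support, hm1 y hy]
    norm_num
  have hρm : tsupport (rho ν g) ⊆ tsupport m :=
    (hρs.trans (closedBall_subset_ball hs2)).trans hball
  have hρU := hρm.trans hmU
  -- test functions
  have hF : ∀ j, ContDiff ℝ 2 (fun z => m z * Ws ν g j z) := by
    intro j
    apply contDiff_of_tsupport_aux
    intro y hy
    have hy' : y ∈ tsupport m := tsupport_mul_subset_left hy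
    exact hm.contDiffAt.mul (Ws_contDiffAt ν hg j (add_ne_zero_of_pos hν (hmp y hy')))
  have hFs : ∀ j, tsupport (fun z => m z * Ws ν g j z) ⊆ tsupport m := fun j =>
    tsupport_mul_subset_left
  have hFc : ∀ j, HasCompactSupport (fun z => m z * Ws ν g j z) := fun j => hmc.mul_right
  have hlap := fun j y => lap_test ν hν hs hs2 hg hgs hm hmp hm1 j y
  have hRest : ∀ j y, Rest ν m y j = lap (fun z => m z * Ws ν g j z) y + pd j (rho ν g) y := by
    intro j y
    rw [hlap]; ring
  have hRc : ∀ j, Continuous (fun y => Rest ν m y j) := by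
    intro j
    simp_rw [hRest]
    exact (lap_continuous (hF j)).add (pd_continuous j hρ1)
  have hRcont : Continuous (Rest ν m) := by
    have : Continuous (fun y => WithLp.toLp 2 (fun j => Rest ν m y j)) :=
      (PiLp.continuous_toLp 2 _).comp (continuous_pi hRc)
    exact this
  have hRcs : HasCompactSupport (Rest ν m) :=
    HasCompactSupport.intro hmc fun y hy => Rest_eq_zero ν hy
  have hRint : Integrable (fun y => ‖Rest ν m y‖) :=
    (hRcont.integrable_of_hasCompactSupport hRcs).norm
  have hvc : ∀ j, ContinuousOn (fun y => v y j) U := fun j => (hv j).1.continuousOn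
  have I1 : ∀ j, Integrable (fun y => v y j * lap (fun z => m z * Ws ν g j z) y) := by
    intro j
    refine integrable_mul_of_tsupport U hU _ _ (hvc j) (lap_continuous (hF j)).continuousOn ?_ ?_
    · exact (hFc j).of_isClosed_subset (isClosed_tsupport _) (tsupport_lap_subset _)
    · exact ((tsupport_lap_subset _).trans (hFs j)).trans hmU
  have I2 : ∀ j, Integrable (fun y => v y j * pd j (rho ν g) y) := by
    intro j
    exact integrable_mul_of_tsupport U hU _ _ (hvc j) (pd_continuous j hρ1).continuousOn
      (hasCompactSupport_pd j hρc) ((tsupport_pd_subset j _).trans hρU)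
  have I3 : ∀ j, Integrable (fun y => rho ν g y * pd j (fun y => v y j) y) := by
    intro j
    simp_rw [mul_comm (rho ν g _)]
    refine integrable_mul_of_tsupport U hU _ _ ?_ hρ1.continuous.continuousOn hρc hρU
    intro y hy
    exact (pd_contDiffAt j (k := 0) ((hv j).1.contDiffAt (hU.mem_nhds hy))
      (by norm_num)).continuousAt.continuousWithinAt
  have e1 : ∀ j, ∫ y, v y j * Rest ν m y j = - ∫ y, rho ν g y * pd j (fun y => v y j) y := by
    intro j
    simp_rw [hRest, mul_add]
    rw [integral_add (I1 j) (I2 j),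
      integral_mul_lap U hU _ _ (hv j) (hF j) (hFc j) ((hFs j).trans hmU), zero_add]
    exact integral_mul_pd j U hU _ _ ((hv j).1.of_le (by norm_num)) hρ1 hρc hρU
  have hdiv : ∀ y, divg v y = ∑ j, pd j (fun y => v y j) y := fun y => rfl
  have I4 : Integrable (fun y => rho ν g y * divg v y) := by
    simp_rw [hdiv, Finset.mul_sum]
    exact integrable_finsetSum _ fun j _ => I3 j
  have e2 : ∫ y, rho ν g y * divg v y = - ∫ y, ∑ j, v y j * Rest ν m y j := by
    simp_rw [hdiv, Finset.mul_sum]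
    rw [integral_finsetSum _ fun j _ => I3 j, integral_finsetSum, ← Finset.sum_neg_distrib]
    · refine Finset.sum_congr rfl fun j _ => ?_
      rw [e1 j, neg_neg]
    · intro j _
      simp_rw [hRest, mul_add]
      exact (I1 j).add (I2 j)
  refine ⟨hRint, I4, ?_⟩
  rw [e2, abs_neg]
  rw [← Real.norm_eq_abs]
  refine (norm_integral_le_integral_norm _).trans ?_
  refine integral_mono_of_nonneg (Eventually.of_forall fun y => norm_nonneg _) hRint
    (Eventually.of_forall fun y => ?_)
  have : ∑ j, v y j * Rest ν m y j = ⟪v y, Rest ν m y⟫ := by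
    rw [PiLp.inner_apply]
    refine Finset.sum_congr rfl fun j _ => ?_
    simp [mul_comm]
  simp only [this]
  by_cases hy : y ∈ tsupport m
  · calc ‖⟪v y, Rest ν m y⟫‖ ≤ ‖v y‖ * ‖Rest ν m y‖ := norm_inner_le_norm _ _
      _ ≤ 1 * ‖Rest ν m y‖ := by gcongr; exact hv1 y (hmU hy)
      _ = _ := one_mul _
  · rw [Rest_eq_zero ν hy]; simp

lemma repr_bound {n : ℕ} (hn : 2 ≤ n) (ν : Eu n) (hν : ‖ν‖ = 1) (U : Set (Eu n))
    (hU : IsOpen U) (m : Eu n → ℝ) (hm : ContDiff ℝ 2 m) (hmc : HasCompactSupport m)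
    (hmU : tsupport m ⊆ U) (hmp : ∀ y ∈ tsupport m, 0 < ⟪ν, y⟫)
    (hm1 : ∀ y ∈ ball ν (1 / 2), m y = 1)
    (v : Eu n → Eu n) (hv : ∀ j, IsHarmonicOn (fun y => v y j) U) (hv1 : ∀ y ∈ U, ‖v y‖ ≤ 1) :
    sphereArea n * |divg v ν| ≤ ∫ y, ‖Rest ν m y‖ := by
  have hω : 0 < sphereArea n := sphereArea_pos (by omega)
  have hνU : ν ∈ U := by
    apply hmU
    apply subset_tsupport
    rw [Function.mem_support, hm1 ν (mem_ball_self (by norm_num))]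
    norm_num
  have hdc : ContinuousAt (divg v) ν := by
    have : divg v = fun y => ∑ j, pd j (fun y => v y j) y := rfl
    rw [this]
    refine tendsto_finsetSum _ fun j _ => ?_
    exact (pd_contDiffAt j (k := 0) ((hv j).1.contDiffAt (hU.mem_nhds hνU))
      (by norm_num)).continuousAt
  apply le_of_forall_pos_le_add
  intro η hη
  obtain ⟨r, hr, hrb⟩ := Metric.continuousAt_iff.1 hdc (η / sphereArea n) (by positivity)
  set s := min (r / 2) (1 / 4) with hsdef
  have hs : 0 < s := by positivity
  have hs2 : s < 1 / 2 := lt_of_le_of_lt (min_le_right _ _) (by norm_num)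
  have hsr : s < r := lt_of_le_of_lt (min_le_left _ _) (by linarith)
  obtain ⟨g, hg, hgs, hgp⟩ := exists_profile n s hs
  obtain ⟨-, hI, hB⟩ := repr_bound_aux hn ν hν U hU m hm hmc hmU hmp hm1 v hv hv1 s hs hs2 g hg hgs
  have hch : ∫ y, rho ν g y = sphereArea n := integral_charge (by omega) ν s hs g hg hgs
  have hρc : HasCompactSupport (rho ν g) :=
    (isCompact_closedBall ν s).of_isClosed_subset (isClosed_tsupport _) (rho_tsupport ν hs hgs)
  have hρi : Integrable (rho ν g) :=
    (rho_contDiff ν hg).continuous.integrable_of_hasCompactSupport hρc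
  have hρp : ∀ y, 0 ≤ rho ν g y := fun y => hgp _ (by positivity)
  have h1 : ∫ y, rho ν g y * (divg v y - divg v ν)
      = (∫ y, rho ν g y * divg v y) - sphereArea n * divg v ν := by
    simp_rw [mul_sub]
    rw [integral_sub hI (hρi.mul_const _), integral_mul_const, hch]
  have h2 : |∫ y, rho ν g y * (divg v y - divg v ν)| ≤ η := by
    calc _ ≤ ∫ y, ‖rho ν g y * (divg v y - divg v ν)‖ := norm_integral_le_integral_norm _
      _ ≤ ∫ y, rho ν g y * (η / sphereArea n) := by
        refine integral_mono_of_nonneg (Eventually.of_forall fun y => norm_nonneg _)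
          (hρi.mul_const _) (Eventually.of_forall fun y => ?_)
        simp only [norm_mul, Real.norm_eq_abs, abs_of_nonneg (hρp y)]
        by_cases hy : s < ‖y - ν‖
        · rw [rho_eq_zero ν hs hgs hy]; simp
        · gcongr
          · exact hρp y
          · have := hrb (x := y) (by rw [dist_eq_norm]; linarith)
            rw [Real.dist_eq] at this
            exact this.le
      _ = η := by
        rw [integral_mul_const, hch]; field_simp
  rw [h1] at h2
  have h3 : sphereArea n * |divg v ν| = |sphereArea n * divg v ν| := by
    rw [abs_mul, abs_of_pos hω]
  rw [h3]
  have := abs_sub_abs_le_abs_sub (sphereArea n * divg v ν) (∫ y, rho ν g y * divg v y)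
  rw [abs_sub_comm] at this
  linarith

lemma exists_split {k : ℕ} (ν : Eu (k + 1)) (hν : ‖ν‖ = 1) :
    ∃ Φ : Eu (k + 1) → ℝ × Eu k,
      MeasurePreserving Φ volume ((volume : Measure ℝ).prod (volume : Measure (Eu k))) ∧
      ∀ y, (Φ y).1 = ⟪ν, y⟫ ∧ ‖(Φ y).2‖ ^ 2 = ‖y‖ ^ 2 - ⟪ν, y⟫ ^ 2 := by
  obtain ⟨b, hb⟩ := Orthonormal.exists_orthonormalBasis_extension_of_card_eq (𝕜 := ℝ)
    (E := Eu (k + 1)) (ι := Fin (k + 1)) (by simp) (v := fun _ => ν) (s := {0}) (by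
      constructor
      · intro i; simpa using hν
      · intro i j hij
        exact absurd (Subsingleton.elim i j) hij)
  have hb0 : b 0 = ν := hb 0 rfl
  have m1 := b.measurePreserving_repr
  have m2 := PiLp.volume_preserving_ofLp (Fin (k + 1))
  have m3 := volume_preserving_piFinSuccAbove (fun _ : Fin (k + 1) => ℝ) 0
  rw [Measure.volume_eq_prod] at m3
  have m4 : MeasurePreserving (Prod.map (id : ℝ → ℝ) (WithLp.toLp 2 : (Fin k → ℝ) → Eu k))
      ((volume : Measure ℝ).prod volume) ((volume : Measure ℝ).prod volume) :=
    (MeasurePreserving.id _).prod (PiLp.volume_preserving_toLp (Fin k))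
  refine ⟨_, m4.comp (m3.comp (m2.comp m1)), fun y => ?_⟩
  have h1 : b.repr y 0 = ⟪ν, y⟫ := by rw [b.repr_apply_apply, hb0]
  refine ⟨?_, ?_⟩
  · simp [MeasurableEquiv.piFinSuccAbove, Fin.insertNthEquiv, h1]
  · have h2 : ‖y‖ ^ 2 = ∑ i, (b.repr y i) ^ 2 := by
      rw [← b.repr.norm_map y, EuclideanSpace.real_norm_sq_eq]
    rw [h2, Fin.sum_univ_succ, h1, EuclideanSpace.real_norm_sq_eq]
    simp [MeasurableEquiv.piFinSuccAbove, Fin.insertNthEquiv]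
    rfl

/-- The kernel profile on the boundary hyperplane. -/
def Kr (n : ℕ) (q : ℝ) : ℝ :=
  (1 + q) ^ (-(n:ℝ) / 2) * Real.sqrt (1 + n * (n - 2) / (1 + q))

lemma Kr_nonneg (n : ℕ) {q : ℝ} (hq : 0 ≤ q) : 0 ≤ Kr n q := by unfold Kr; positivity

lemma tan_image : Real.tan '' Set.Ioo 0 (π / 2) = Set.Ioi 0 := by
  ext x
  constructor
  · rintro ⟨θ, hθ, rfl⟩
    exact Real.tan_pos_of_pos_of_lt_pi_div_two hθ.1 hθ.2
  · intro hx
    exact ⟨Real.arctan x, ⟨Real.arctan_pos.2 hx, Real.arctan_lt_pi_div_two x⟩, Real.tan_arctan x⟩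

lemma integral_Kr_radial {k : ℕ} (hk : 1 ≤ k) :
    ∫ r in Set.Ioi (0:ℝ), r ^ (k - 1) * Kr (k + 1) (r ^ 2)
      = ∫ θ in (0:ℝ)..(π / 2),
      Real.sqrt (1 + ((k + 1 : ℕ) : ℝ) * (((k + 1 : ℕ) : ℝ) - 2) * Real.cos θ ^ 2)
        * Real.sin θ ^ (k + 1 - 2) := by
  rw [← tan_image, integral_image_eq_integral_abs_deriv_smul (f' := fun x => 1 / Real.cos x ^ 2)
    measurableSet_Ioo]
  · rw [intervalIntegral.integral_of_le (by positivity), integral_Ioc_eq_integral_Ioo]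
    refine setIntegral_congr_fun measurableSet_Ioo fun θ hθ => ?_
    have hc : 0 < Real.cos θ := Real.cos_pos_of_mem_Ioo ⟨by linarith [hθ.1, pi_pos], hθ.2⟩
    have h1 : 1 + Real.tan θ ^ 2 = (Real.cos θ ^ 2)⁻¹ := by
      rw [← Real.inv_one_add_tan_sq hc.ne', inv_inv]
    have h2 : (1 + Real.tan θ ^ 2) ^ (-((k + 1 : ℕ) : ℝ) / 2) = Real.cos θ ^ (k + 1) := by
      rw [h1, Real.inv_rpow (by positivity), ← Real.rpow_neg (by positivity),
        ← Real.rpow_natCast (Real.cos θ) 2, ← Real.rpow_mul hc.le, ← Real.rpow_natCast]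
      congr 1; push_cast; ring
    simp only [Kr, h2, smul_eq_mul]
    rw [h1, div_inv_eq_mul, Real.tan_eq_sin_div_cos, abs_of_pos (by positivity)]
    obtain ⟨j, rfl⟩ : ∃ j, k = j + 1 := ⟨k - 1, by omega⟩
    simp only [Nat.add_sub_cancel, show j + 1 + 1 - 2 = j by omega]
    rw [div_pow]
    field_simp
    ring_nf
  · intro θ hθ
    have hc : 0 < Real.cos θ := Real.cos_pos_of_mem_Ioo ⟨by linarith [hθ.1, pi_pos], hθ.2⟩
    exact (Real.hasDerivAt_tan hc.ne').hasDerivWithinAt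
  · exact Real.injOn_tan.mono (Set.Ioo_subset_Ioo_left (by linarith [pi_pos]))

lemma integral_Kr {k : ℕ} (hk : 1 ≤ k) :
    2 * ∫ x : Eu k, Kr (k + 1) (‖x‖ ^ 2) = sphereArea (k + 1) * Dconst (k + 1) := by
  have : Nonempty (Fin k) := ⟨⟨0, hk⟩⟩
  have : Nontrivial (Eu k) := inferInstance
  have h := integral_fun_norm_addHaar (volume : Measure (Eu k)) (fun r => Kr (k + 1) (r ^ 2))
  rw [h]
  simp only [finrank_euclideanSpace, Fintype.card_fin, smul_eq_mul, nsmul_eq_mul]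
  rw [integral_Kr_radial hk, Dconst, ← mul_assoc (k:ℝ), sphereArea_eq hk]
  have := (sphereArea_pos (n := k + 1) (by omega)).ne'
  simp only [Nat.add_sub_cancel]
  field_simp

lemma integrable_Kr {k : ℕ} (hk : 1 ≤ k) :
    Integrable (fun x : Eu k => Kr (k + 1) (‖x‖ ^ 2)) := by
  have h0 : Integrable (fun x : Eu k => (1 + ‖x‖ ^ 2) ^ (-((k + 1 : ℕ):ℝ) / 2)) :=
    integrable_rpow_neg_one_add_norm_sq (by simp)
  have hk0 : (0:ℝ) ≤ ((k + 1 : ℕ) : ℝ) * (((k + 1 : ℕ) : ℝ) - 2) := by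
    have : (1:ℝ) ≤ k := by exact_mod_cast hk
    push_cast
    nlinarith
  refine (h0.mul_const (Real.sqrt (1 + ((k + 1 : ℕ) : ℝ) * (((k + 1 : ℕ) : ℝ) - 2)))).mono' ?_ ?_
  · unfold Kr
    refine Measurable.aestronglyMeasurable ?_
    fun_prop
  · refine Eventually.of_forall fun x => ?_
    rw [Real.norm_of_nonneg (Kr_nonneg _ (by positivity)), Kr]
    gcongr
    exact div_le_self hk0 (by nlinarith [sq_nonneg ‖x‖])

lemma integral_slab {k : ℕ} (hk : 1 ≤ k) (ν : Eu (k + 1)) (hν : ‖ν‖ = 1) (q : ℝ → ℝ)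
    (hq : Integrable q) :
    Integrable (fun y : Eu (k + 1) => q ⟪ν, y⟫ * (2 * Kr (k + 1) (‖y‖ ^ 2 - ⟪ν, y⟫ ^ 2))) ∧
    ∫ y : Eu (k + 1), q ⟪ν, y⟫ * (2 * Kr (k + 1) (‖y‖ ^ 2 - ⟪ν, y⟫ ^ 2))
      = (∫ t, q t) * (sphereArea (k + 1) * Dconst (k + 1)) := by
  obtain ⟨Φ, hΦ, hΦ'⟩ := exists_split ν hν
  have hI := hq.mul_prod ((integrable_Kr hk).const_mul 2)
  have e : (fun y : Eu (k + 1) => q ⟪ν, y⟫ * (2 * Kr (k + 1) (‖y‖ ^ 2 - ⟪ν, y⟫ ^ 2)))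
      = (fun z : ℝ × Eu k => q z.1 * (2 * Kr (k + 1) (‖z.2‖ ^ 2))) ∘ Φ := by
    ext y
    simp only [Function.comp_apply, (hΦ' y).1, (hΦ' y).2]
  rw [e]
  refine ⟨(hΦ.integrable_comp hI.aestronglyMeasurable).2 hI, ?_⟩
  have h2 := integral_map hΦ.aemeasurable (f := fun z : ℝ × Eu k => q z.1 * (2 * Kr (k + 1) (‖z.2‖ ^ 2)))
    (by rw [hΦ.map_eq]; exact hI.aestronglyMeasurable)
  rw [hΦ.map_eq] at h2
  simp only [Function.comp_def]
  rw [← h2, integral_prod_mul q (fun x : Eu k => 2 * Kr (k + 1) (‖x‖ ^ 2)), integral_const_mul,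
    integral_Kr hk]

lemma norm_dV_eq {n : ℕ} {a ν : Eu n} {q : ℝ} (hq : 0 ≤ q) (hν : ‖ν‖ = 1) (ha : ‖a‖ ^ 2 = 1 + q)
    (h1 : ⟪a, ν⟫ = 1) : ‖dV a ν‖ = Kr n q := by
  have hs : 0 < 1 + q := by linarith
  rw [← sq_eq_sq₀ (norm_nonneg _) (Kr_nonneg n hq), dV_apply, ha, h1, norm_sub_sq_real, norm_smul,
    norm_smul, real_inner_smul_left, real_inner_smul_right, real_inner_comm, h1, hν, mul_pow,
    mul_pow, ha, Real.norm_eq_abs, Real.norm_eq_abs, sq_abs, sq_abs, Kr]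
  have key : 0 ≤ 1 + n * (n - 2) / (1 + q) := by
    have e : 1 + n * (n - 2) / (1 + q) = (((n:ℝ) - 1) ^ 2 + q) / (1 + q) := by field_simp; ring
    rw [e]; positivity
  rw [mul_pow _ (Real.sqrt _), Real.sq_sqrt key, Real.rpow_sub hs, Real.rpow_one]
  field_simp
  ring

lemma norm_reflL_le {n : ℕ} {ν : Eu n} (hν : ‖ν‖ = 1) (w : Eu n) : ‖reflL ν w‖ ≤ 3 * ‖w‖ := by
  rw [reflL_apply]
  have h := abs_real_inner_le_norm ν w
  rw [hν, one_mul] at h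
  calc _ ≤ ‖w‖ + ‖(2 * ⟪ν, w⟫) • ν‖ := norm_sub_le _ _
    _ = ‖w‖ + 2 * |⟪ν, w⟫| := by rw [norm_smul, hν]; simp
    _ ≤ _ := by linarith

lemma norm_reflL {n : ℕ} {ν : Eu n} (hν : ‖ν‖ = 1) (w : Eu n) : ‖reflL ν w‖ ^ 2 = ‖w‖ ^ 2 := by
  rw [reflL_apply, norm_sub_sq_real, norm_smul, inner_smul_right, hν, real_inner_comm w ν]
  rw [Real.norm_eq_abs, mul_one, sq_abs]
  ring

lemma inner_reflL {n : ℕ} {ν : Eu n} (hν : ‖ν‖ = 1) (w h : Eu n) :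
    ⟪reflL ν w, reflL ν h⟫ = ⟪w, h⟫ := by
  rw [reflL_apply, reflL_apply, inner_sub_left, inner_sub_right, inner_sub_right,
    inner_smul_left, inner_smul_left, inner_smul_right, inner_smul_right,
    real_inner_self_eq_norm_sq, hν, real_inner_comm w ν]
  simp
  ring

lemma reflL_Vf {n : ℕ} {ν : Eu n} (hν : ‖ν‖ = 1) (z : Eu n) :
    reflL ν (Vf z) = Vf (reflL ν z) := by
  rw [Vf, map_smul, Vf, norm_reflL hν]

lemma reflL_dV {n : ℕ} {ν : Eu n} (hν : ‖ν‖ = 1) (z h : Eu n) :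
    reflL ν (dV z h) = dV (reflL ν z) (reflL ν h) := by
  rw [dV_apply, dV_apply, map_sub, map_smul, map_smul, norm_reflL hν, inner_reflL hν]

lemma Vf_neg {n : ℕ} (z : Eu n) : Vf (-z) = - Vf z := by simp [Vf]
lemma dV_neg {n : ℕ} (z h : Eu n) : dV (-z) h = dV z h := by simp [dV_apply]

lemma reflL_add_self {n : ℕ} {ν y : Eu n} (hν : ‖ν‖ = 1) :
    reflL ν (y + ν) = -((ν - (y - ⟪ν, y⟫ • ν)) + ⟪ν, y⟫ • ν) := by
  rw [reflL_apply, inner_add_right, real_inner_self_eq_norm_sq, hν]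
  module

lemma Wf_eq {n : ℕ} {ν y : Eu n} (hν : ‖ν‖ = 1) :
    Wf ν y = Vf ((ν - (y - ⟪ν, y⟫ • ν)) - ⟪ν, y⟫ • ν) - Vf ((ν - (y - ⟪ν, y⟫ • ν)) + ⟪ν, y⟫ • ν) := by
  rw [Wf, reflL_Vf hν, reflL_add_self hν, Vf_neg, ← Vf_neg (y - ν)]
  have : -(y - ν) = ν - (y - ⟪ν, y⟫ • ν) - ⟪ν, y⟫ • ν := by module
  rw [this, ← sub_eq_add_neg]

lemma dW_eq {n : ℕ} {ν y : Eu n} (hν : ‖ν‖ = 1) :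
    dW ν y ν = -dV ((ν - (y - ⟪ν, y⟫ • ν)) - ⟪ν, y⟫ • ν) ν
      - dV ((ν - (y - ⟪ν, y⟫ • ν)) + ⟪ν, y⟫ • ν) ν := by
  have h1 : dW ν y ν = -dV (y - ν) ν + reflL ν (dV (y + ν) ν) := by simp [dW]
  have h2 : reflL ν ν = -ν := by
    rw [reflL_apply, real_inner_self_eq_norm_sq, hν]; module
  have h3 : -(y - ν) = ν - (y - ⟪ν, y⟫ • ν) - ⟪ν, y⟫ • ν := by module
  rw [h1, reflL_dV hν, reflL_add_self hν, h2, dV_neg, map_neg, ← dV_neg (y - ν), h3,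
    sub_eq_add_neg (-dV _ ν)]

lemma contDiffAt_dV {n : ℕ} (ν : Eu n) {z : Eu n} (hz : z ≠ 0) :
    ContDiffAt ℝ 1 (fun z => dV z ν) z := by
  have hq : ‖z‖ ^ 2 ≠ 0 := by positivity
  simp_rw [dV_apply]
  have a1 : ContDiffAt ℝ 1 (fun z : Eu n => ‖z‖ ^ 2) z := (contDiff_norm_sq ℝ).contDiffAt
  have a2 : ContDiffAt ℝ 1 (fun z : Eu n => ⟪z, ν⟫) z :=
    (contDiff_id.inner ℝ contDiff_const).contDiffAt
  exact ((a1.rpow_const_of_ne hq).smul contDiffAt_const).sub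
    (((contDiffAt_const.mul (a1.rpow_const_of_ne hq)).mul a2).smul contDiffAt_id)

lemma near_bounds {n : ℕ} {ν : Eu n} (hν : ‖ν‖ = 1) (ρ : ℝ) :
    ∃ C : ℝ, 0 ≤ C ∧ ∀ y : Eu n, 0 < ⟪ν, y⟫ → ⟪ν, y⟫ ≤ 1 / 2 → ‖y‖ ≤ ρ →
      ‖dW ν y ν + (2:ℝ) • dV (ν - (y - ⟪ν, y⟫ • ν)) ν‖ ≤ C * ⟪ν, y⟫ ∧
      ‖Wf ν y + (2 * ⟪ν, y⟫) • dV (ν - (y - ⟪ν, y⟫ • ν)) ν‖ ≤ C * ⟪ν, y⟫ ^ 2 ∧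
      ‖Wf ν y‖ ≤ C * ⟪ν, y⟫ := by
  set S : Set (Eu n) := {z | 1 / 2 ≤ ⟪ν, z⟫} ∩ closedBall 0 (ρ + 2) with hS
  have hSc : IsCompact S := by
    refine (isCompact_closedBall _ _).inter_left ?_
    exact isClosed_le continuous_const (by fun_prop)
  have hS0 : ∀ z ∈ S, z ≠ 0 := by
    rintro z ⟨hz, -⟩ rfl
    simp at hz
    linarith
  have hcd : ∀ z ∈ S, ContDiffAt ℝ 1 (fun z => dV z ν) z := fun z hz => contDiffAt_dV ν (hS0 z hz)
  have hll : LocallyLipschitzOn S (fun z => dV z ν) := by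
    intro z hz
    obtain ⟨K, t, ht, hK⟩ := (hcd z hz).exists_lipschitzOnWith
    exact ⟨K, t, nhdsWithin_le_nhds ht, hK⟩
  obtain ⟨K, hK⟩ := hll.exists_lipschitzOnWith_of_compact hSc
  obtain ⟨B, hB⟩ := hSc.exists_bound_of_continuousOn (f := fun z => dV z ν)
    (fun z hz => (hcd z hz).continuousAt.continuousWithinAt)
  have hνν : ⟪ν, ν⟫ = 1 := by rw [real_inner_self_eq_norm_sq, hν]; norm_num
  refine ⟨2 * K + 2 * |B|, by positivity, fun y ht ht2 hy => ?_⟩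
  set t : ℝ := ⟪ν, y⟫ with htdef
  set a : Eu n := ν - (y - t • ν) with ha
  have hνa : ⟪ν, a⟫ = 1 := by
    rw [ha, inner_sub_right, inner_sub_right, inner_smul_right, hνν]; ring
  have hna : ‖a‖ ≤ ρ + 3 / 2 := by
    calc ‖a‖ ≤ ‖ν‖ + ‖y - t • ν‖ := norm_sub_le _ _
      _ ≤ ‖ν‖ + (‖y‖ + ‖t • ν‖) := by gcongr; exact norm_sub_le _ _
      _ = 1 + (‖y‖ + t) := by rw [norm_smul, hν, Real.norm_of_nonneg ht.le, mul_one]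
      _ ≤ _ := by linarith
  have hin : ∀ s : ℝ, |s| ≤ 1 / 2 → a + s • ν ∈ S := by
    intro s hs
    refine ⟨?_, ?_⟩
    · show 1 / 2 ≤ ⟪ν, a + s • ν⟫
      rw [inner_add_right, inner_smul_right, hνa, hνν]
      linarith [neg_abs_le s]
    · rw [mem_closedBall_zero_iff]
      calc _ ≤ ‖a‖ + ‖s • ν‖ := norm_add_le _ _
        _ = ‖a‖ + |s| := by rw [norm_smul, hν, mul_one, Real.norm_eq_abs]
        _ ≤ _ := by linarith
  have haS : a ∈ S := by simpa using hin 0 (by norm_num)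
  have hl : ∀ s : ℝ, |s| ≤ 1 / 2 → ‖dV (a + s • ν) ν - dV a ν‖ ≤ K * |s| := by
    intro s hs
    have := hK.norm_sub_le (hin s hs) haS
    simpa [norm_smul, hν] using this
  have hl2 : ∀ s : ℝ, 0 ≤ s → s ≤ 1 / 2 →
      ‖-dV (a - s • ν) ν - dV (a + s • ν) ν + (2:ℝ) • dV a ν‖ ≤ 2 * K * s := by
    intro s hs hs2
    have e1 := hl s (by rwa [abs_of_nonneg hs])
    have e2 := hl (-s) (by rwa [abs_neg, abs_of_nonneg hs])
    rw [abs_neg, neg_smul, ← sub_eq_add_neg] at e2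
    rw [abs_of_nonneg hs] at e1 e2
    calc _ = ‖(dV (a - s • ν) ν - dV a ν) + (dV (a + s • ν) ν - dV a ν)‖ := by
          rw [← norm_neg]; congr 1; module
      _ ≤ _ := norm_add_le _ _
      _ ≤ _ := by linarith
  have f1 : ‖dW ν y ν + (2:ℝ) • dV a ν‖ ≤ 2 * K * t := by
    rw [dW_eq hν]; exact hl2 t ht.le ht2
  have f2 : ‖Wf ν y + (2 * t) • dV a ν‖ ≤ 2 * K * t ^ 2 := by
    rw [Wf_eq hν]
    have hd : ∀ s ∈ Set.Icc 0 t, HasDerivWithinAt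
        (fun s : ℝ => Vf (a - s • ν) - Vf (a + s • ν) + (2 * s) • dV a ν)
        (-dV (a - s • ν) ν - dV (a + s • ν) ν + (2:ℝ) • dV a ν) (Set.Icc 0 t) s := by
      intro s hs
      have i1 : a + s • ν ∈ S := hin s (by rw [abs_of_nonneg hs.1]; linarith [hs.2])
      have i2 : a - s • ν ∈ S := by
        have := hin (-s) (by rw [abs_neg, abs_of_nonneg hs.1]; linarith [hs.2])
        rwa [neg_smul, ← sub_eq_add_neg] at this
      have d0 : HasDerivAt (fun s : ℝ => s • ν) ν s := by
        simpa using (hasDerivAt_id s).smul_const ν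
      have d1 := (hasFDerivAt_Vf (hS0 _ i1)).comp_hasDerivAt s (d0.const_add a)
      have d2 := (hasFDerivAt_Vf (hS0 _ i2)).comp_hasDerivAt s (d0.const_sub a)
      have d3 : HasDerivAt (fun s : ℝ => (2 * s) • dV a ν) ((2:ℝ) • dV a ν) s := by
        simpa using ((hasDerivAt_id s).const_mul 2).smul_const (dV a ν)
      have := ((d2.sub d1).add d3).hasDerivWithinAt (s := Set.Icc 0 t)
      rw [map_neg] at this
      exact this
    have := norm_image_sub_le_of_norm_deriv_le_segment' hd (C := 2 * K * t) (fun s hs =>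
      (hl2 s hs.1 (by linarith [hs.2])).trans (by
        have := hs.2.le
        have : (0:ℝ) ≤ K := K.2
        gcongr)) t ⟨ht.le, le_rfl⟩
    simp only [zero_smul, sub_zero, add_zero, sub_self, mul_zero] at this
    calc _ ≤ _ := this
      _ = _ := by ring
  have hBa : ‖dV a ν‖ ≤ |B| := (hB a haS).trans (le_abs_self _)
  have hK0 : (0:ℝ) ≤ K := K.2
  refine ⟨f1.trans (by nlinarith [abs_nonneg B]), f2.trans (by nlinarith [abs_nonneg B, sq_nonneg t]), ?_⟩
  calc ‖Wf ν y‖ = ‖(Wf ν y + (2 * t) • dV a ν) - (2 * t) • dV a ν‖ := by congr 1; module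
    _ ≤ ‖Wf ν y + (2 * t) • dV a ν‖ + ‖(2 * t) • dV a ν‖ := norm_sub_le _ _
    _ ≤ 2 * K * t ^ 2 + 2 * t * |B| := by
        rw [norm_smul, Real.norm_of_nonneg (by positivity : (0:ℝ) ≤ 2 * t)]
        gcongr
    _ ≤ _ := by nlinarith [mul_nonneg hK0 ht.le]

lemma norm_dV_le {n : ℕ} (z h : Eu n) (hz : z ≠ 0) :
    ‖dV z h‖ ≤ (n + 1) * (‖z‖ ^ 2) ^ (-(n:ℝ) / 2) * ‖h‖ := by
  have hq : 0 < ‖z‖ ^ 2 := by positivity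
  rw [dV_apply]
  have h1 := abs_real_inner_le_norm z h
  set P := (‖z‖ ^ 2) ^ (-(n:ℝ) / 2) with hP
  have hP0 : 0 < P := by positivity
  have e : (‖z‖ ^ 2) ^ (-(n:ℝ) / 2 - 1) = P / ‖z‖ ^ 2 := by
    rw [Real.rpow_sub hq, Real.rpow_one]
  rw [e]
  calc _ ≤ ‖P • h‖ + ‖(n * (P / ‖z‖ ^ 2) * ⟪z, h⟫) • z‖ := norm_sub_le _ _
    _ = P * ‖h‖ + n * (P / ‖z‖ ^ 2) * |⟪z, h⟫| * ‖z‖ := by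
      rw [norm_smul, norm_smul, Real.norm_of_nonneg hP0.le, norm_mul,
        Real.norm_of_nonneg (by positivity : (0:ℝ) ≤ n * (P / ‖z‖ ^ 2)), Real.norm_eq_abs]
    _ ≤ P * ‖h‖ + n * (P / ‖z‖ ^ 2) * (‖z‖ * ‖h‖) * ‖z‖ := by gcongr
    _ = _ := by
      have := norm_pos_iff.2 hz
      field_simp
      ring

lemma far_bounds {n : ℕ} {ν : Eu n} (hν : ‖ν‖ = 1) {M : ℝ} (hM : 2 ≤ M) {y : Eu n}
    (hy : M ≤ ‖y‖) (hy2 : ‖y‖ ≤ 2 * M) :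
    (∀ h, ‖dW ν y h‖ ≤ 4 * (n + 1) * ((M / 2) ^ 2) ^ (-(n:ℝ) / 2) * ‖h‖) ∧
      ‖Wf ν y‖ ≤ 12 * M * ((M / 2) ^ 2) ^ (-(n:ℝ) / 2) := by
  have key : ∀ z : Eu n, M / 2 ≤ ‖z‖ →
      z ≠ 0 ∧ (‖z‖ ^ 2) ^ (-(n:ℝ) / 2) ≤ ((M / 2) ^ 2) ^ (-(n:ℝ) / 2) := by
    intro z hz
    refine ⟨norm_pos_iff.1 (by linarith), ?_⟩
    apply Real.rpow_le_rpow_of_nonpos (by positivity) (by gcongr)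
    have : (0:ℝ) ≤ n := by positivity
    linarith
  have m1 : M / 2 ≤ ‖y - ν‖ := by
    have := norm_sub_norm_le y ν; rw [hν] at this; linarith
  have m2 : M / 2 ≤ ‖y + ν‖ := by
    have := norm_sub_norm_le y (-ν); rw [norm_neg, hν, sub_neg_eq_add] at this; linarith
  have u1 : ‖y - ν‖ ≤ 3 * M := by
    have := norm_sub_le y ν; rw [hν] at this; linarith
  have u2 : ‖y + ν‖ ≤ 3 * M := by
    have := norm_add_le y ν; rw [hν] at this; linarith
  set P := ((M / 2) ^ 2) ^ (-(n:ℝ) / 2) with hP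
  have hP0 : 0 < P := by positivity
  have dk : ∀ z h : Eu n, M / 2 ≤ ‖z‖ → ‖dV z h‖ ≤ (n + 1) * P * ‖h‖ := fun z h hz =>
    (norm_dV_le z h (key z hz).1).trans (by gcongr; exact (key z hz).2)
  have vk : ∀ z : Eu n, M / 2 ≤ ‖z‖ → ‖z‖ ≤ 3 * M → ‖Vf z‖ ≤ P * (3 * M) := fun z hz hz2 => by
    rw [Vf, norm_smul, Real.norm_of_nonneg (by positivity)]
    gcongr
    exact (key z hz).2
  constructor
  · intro h
    have h1 : dW ν y h = -dV (y - ν) h + reflL ν (dV (y + ν) h) := by simp [dW]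
    rw [h1]
    calc _ ≤ ‖-dV (y - ν) h‖ + ‖reflL ν (dV (y + ν) h)‖ := norm_add_le _ _
      _ ≤ ‖dV (y - ν) h‖ + 3 * ‖dV (y + ν) h‖ := by
        rw [norm_neg]; gcongr; exact norm_reflL_le hν _
      _ ≤ _ := by linarith [dk _ h m1, dk _ h m2]
  · rw [Wf]
    calc _ ≤ ‖-Vf (y - ν)‖ + ‖reflL ν (Vf (y + ν))‖ := norm_add_le _ _
      _ ≤ ‖Vf (y - ν)‖ + 3 * ‖Vf (y + ν)‖ := by
        rw [norm_neg]; gcongr; exact norm_reflL_le hν _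
      _ ≤ _ := by linarith [vk _ m1 u1, vk _ m2 u2]

/-- Derivative of the smooth transition. -/
def kap1 : ℝ → ℝ := deriv Real.smoothTransition
/-- Second derivative of the smooth transition. -/
def kap2 : ℝ → ℝ := deriv kap1

lemma contDiff_kap : ContDiff ℝ 4 Real.smoothTransition := Real.smoothTransition.contDiff (n := 4)

lemma contDiff_kap1 : ContDiff ℝ 3 kap1 :=
  ((contDiff_succ_iff_deriv (n := 3)).1 (by
    rw [show (3 + 1 : WithTop ℕ∞) = 4 by norm_num]; exact contDiff_kap)).2.2

lemma contDiff_kap2 : ContDiff ℝ 2 kap2 :=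
  ((contDiff_succ_iff_deriv (n := 2)).1 (by
    rw [show (2 + 1 : WithTop ℕ∞) = 3 by norm_num]; exact contDiff_kap1)).2.2

lemma hasDerivAt_kap (x : ℝ) : HasDerivAt Real.smoothTransition (kap1 x) x :=
  (contDiff_kap.differentiable (by norm_num) x).hasDerivAt

lemma hasDerivAt_kap1 (x : ℝ) : HasDerivAt kap1 (kap2 x) x :=
  (contDiff_kap1.differentiable (by norm_num) x).hasDerivAt

lemma kap1_neg {x : ℝ} (hx : x < 0) : kap1 x = 0 := by
  have : Real.smoothTransition =ᶠ[nhds x] fun _ => 0 := by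
    filter_upwards [Iio_mem_nhds hx] with z hz
    exact Real.smoothTransition.zero_of_nonpos (le_of_lt hz)
  rw [kap1, this.deriv_eq, deriv_const]

lemma kap1_big {x : ℝ} (hx : 1 < x) : kap1 x = 0 := by
  have : Real.smoothTransition =ᶠ[nhds x] fun _ => 1 := by
    filter_upwards [Ioi_mem_nhds hx] with z hz
    exact Real.smoothTransition.one_of_one_le (le_of_lt hz)
  rw [kap1, this.deriv_eq, deriv_const]

lemma kap2_neg {x : ℝ} (hx : x < 0) : kap2 x = 0 := by
  have : kap1 =ᶠ[nhds x] fun _ => 0 := by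
    filter_upwards [Iio_mem_nhds hx] with z hz
    exact kap1_neg hz
  rw [kap2, this.deriv_eq, deriv_const]

lemma kap2_big {x : ℝ} (hx : 1 < x) : kap2 x = 0 := by
  have : kap1 =ᶠ[nhds x] fun _ => 0 := by
    filter_upwards [Ioi_mem_nhds hx] with z hz
    exact kap1_big hz
  rw [kap2, this.deriv_eq, deriv_const]

lemma kap1_nonneg (x : ℝ) : 0 ≤ kap1 x := Real.smoothTransition.monotone.deriv_nonneg

lemma exists_kap_bound : ∃ B : ℝ, 0 ≤ B ∧ ∀ x, |kap1 x| ≤ B ∧ |kap2 x| ≤ B := by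
  obtain ⟨B1, h1⟩ := (isCompact_Icc (a := (0:ℝ)) (b := 1)).exists_bound_of_continuousOn
    contDiff_kap1.continuous.continuousOn
  obtain ⟨B2, h2⟩ := (isCompact_Icc (a := (0:ℝ)) (b := 1)).exists_bound_of_continuousOn
    contDiff_kap2.continuous.continuousOn
  refine ⟨|B1| + |B2|, by positivity, fun x => ?_⟩
  by_cases h : x ∈ Set.Icc (0:ℝ) 1
  · have a := h1 x h
    have b := h2 x h
    rw [Real.norm_eq_abs] at a b
    constructor <;> linarith [le_abs_self B1, le_abs_self B2, abs_nonneg B1, abs_nonneg B2]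
  · have : kap1 x = 0 ∧ kap2 x = 0 := by
      by_cases h0 : x < 0
      · exact ⟨kap1_neg h0, kap2_neg h0⟩
      · have : 1 < x := by
          by_contra h'
          exact h ⟨not_lt.1 h0, not_lt.1 h'⟩
        exact ⟨kap1_big this, kap2_big this⟩
    rw [this.1, this.2]
    simp
    positivity

/-- Logarithmic argument. -/
def lx (N t : ℝ) : ℝ := 1 + Real.log (2 * t) / N

/-- Logarithmic cutoff in the normal variable. -/
def zeta (N t : ℝ) : ℝ := if t ≤ 0 then 0 else Real.smoothTransition (lx N t)

/-- First derivative of the logarithmic cutoff. -/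
def zeta1 (N t : ℝ) : ℝ := kap1 (lx N t) / (N * t)

/-- Second derivative of the logarithmic cutoff. -/
def zeta2 (N t : ℝ) : ℝ := kap2 (lx N t) / (N ^ 2 * t ^ 2) - kap1 (lx N t) / (N * t ^ 2)

lemma lx_le_zero_iff {N t : ℝ} (hN : 0 < N) (ht : 0 < t) : lx N t ≤ 0 ↔ t ≤ Real.exp (-N) / 2 := by
  have : lx N t ≤ 0 ↔ Real.log (2 * t) ≤ -N := by
    rw [lx, ← le_sub_iff_add_le', zero_sub, div_le_iff₀ hN]; simp
  rw [this, Real.log_le_iff_le_exp (by positivity)]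
  constructor <;> intro h <;> linarith

lemma one_le_lx_iff {N t : ℝ} (hN : 0 < N) (ht : 0 < t) : 1 ≤ lx N t ↔ 1 / 2 ≤ t := by
  have : 1 ≤ lx N t ↔ 0 ≤ Real.log (2 * t) := by
    rw [lx, le_add_iff_nonneg_right, le_div_iff₀ hN, zero_mul]
  rw [this, Real.log_nonneg_iff (by positivity)]
  constructor <;> intro h <;> linarith

lemma lx_le_one_iff {N t : ℝ} (hN : 0 < N) (ht : 0 < t) : lx N t ≤ 1 ↔ t ≤ 1 / 2 := by
  have : lx N t ≤ 1 ↔ Real.log (2 * t) ≤ 0 := by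
    rw [lx, add_le_iff_nonpos_right, div_le_iff₀ hN, zero_mul]
  rw [this, Real.log_nonpos_iff (by positivity)]
  constructor <;> intro h <;> linarith

lemma hasDerivAt_lx {N t : ℝ} (ht : 0 < t) : HasDerivAt (lx N) (1 / (N * t)) t := by
  have h1 : HasDerivAt (fun t : ℝ => 2 * t) 2 t := by simpa using (hasDerivAt_id t).const_mul 2
  have h := ((h1.log (by positivity)).div_const N).const_add 1
  refine HasDerivAt.congr_deriv (f := lx N) h ?_
  by_cases hN : N = 0
  · simp [hN]
  · field_simp

lemma zeta_zero {N t : ℝ} (hN : 0 < N) (ht : t ≤ Real.exp (-N) / 2) : zeta N t = 0 := by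
  unfold zeta
  split_ifs with h
  · rfl
  · exact Real.smoothTransition.zero_of_nonpos ((lx_le_zero_iff hN (not_le.1 h)).2 ht)

lemma zeta_one {N t : ℝ} (hN : 0 < N) (ht : 1 / 2 ≤ t) : zeta N t = 1 := by
  have h : 0 < t := by linarith
  rw [zeta, if_neg (not_le.2 h)]
  exact Real.smoothTransition.one_of_one_le ((one_le_lx_iff hN h).2 ht)

lemma zeta_nonneg (N t : ℝ) : 0 ≤ zeta N t := by
  unfold zeta
  split_ifs
  · rfl
  · exact Real.smoothTransition.nonneg _

lemma zeta_le_one (N t : ℝ) : zeta N t ≤ 1 := by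
  unfold zeta
  split_ifs
  · norm_num
  · exact Real.smoothTransition.le_one _

lemma zeta_ev {N t : ℝ} (ht : 0 < t) :
    zeta N =ᶠ[nhds t] fun s => Real.smoothTransition (lx N s) := by
  filter_upwards [Ioi_mem_nhds ht] with s hs
  rw [zeta, if_neg (not_le.2 hs)]

lemma hasDerivAt_zeta {N t : ℝ} (ht : 0 < t) : HasDerivAt (zeta N) (zeta1 N t) t := by
  have h := (hasDerivAt_kap (lx N t)).comp t (hasDerivAt_lx (N := N) ht)
  refine (h.congr_of_eventuallyEq (zeta_ev ht)).congr_deriv ?_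
  rw [zeta1]; ring

lemma hasDerivAt_zeta1 {N t : ℝ} (hN : 0 < N) (ht : 0 < t) :
    HasDerivAt (zeta1 N) (zeta2 N t) t := by
  have h := (hasDerivAt_kap1 (lx N t)).comp t (hasDerivAt_lx (N := N) ht)
  have h2 := h.div ((hasDerivAt_id t).const_mul N) (by simp only [id]; positivity)
  refine h2.congr_deriv ?_
  rw [zeta2]
  simp
  field_simp

lemma contDiff_zeta {N : ℝ} (hN : 0 < N) : ContDiff ℝ 4 (zeta N) := by
  rw [contDiff_iff_contDiffAt]
  intro t
  by_cases ht : 0 < t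
  · refine ContDiffAt.congr_of_eventuallyEq ?_ (zeta_ev ht)
    refine contDiff_kap.contDiffAt.comp t ?_
    unfold lx
    have : ContDiffAt ℝ 4 (fun t : ℝ => Real.log (2 * t)) t :=
      ContDiffAt.log (contDiffAt_const.mul contDiffAt_id) (by simp; positivity)
    exact contDiffAt_const.add (this.div_const N)
  · have : zeta N =ᶠ[nhds t] fun _ => 0 := by
      have hp : t < Real.exp (-N) / 2 := by
        have := Real.exp_pos (-N); linarith
      filter_upwards [Iio_mem_nhds hp] with s hs
      exact zeta_zero hN (le_of_lt hs)
    exact contDiffAt_const.congr_of_eventuallyEq this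

/-- Dominating density in the normal variable. -/
def qf (N B : ℝ) : ℝ → ℝ := (Set.Icc (Real.exp (-N) / 2) (1 / 2)).indicator
  fun t => kap1 (lx N t) / (N * t) + B / (N ^ 2 * t)

lemma qf_integral {N : ℝ} (hN : 0 < N) (B : ℝ) :
    Integrable (qf N B) ∧ ∫ t, qf N B t = 1 + B / N := by
  have hp : 0 < Real.exp (-N) / 2 := by positivity
  have hle : Real.exp (-N) / 2 ≤ 1 / 2 := by
    have : Real.exp (-N) ≤ 1 := Real.exp_le_one_iff.2 (by linarith)
    linarith
  have hcont : ContinuousOn (fun t => kap1 (lx N t) / (N * t) + B / (N ^ 2 * t))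
      (Set.Icc (Real.exp (-N) / 2) (1 / 2)) := by
    intro t ht
    have ht0 : 0 < t := hp.trans_le ht.1
    apply ContinuousAt.continuousWithinAt
    have h1 : ContinuousAt (fun t => kap1 (lx N t)) t :=
      contDiff_kap1.continuous.continuousAt.comp (hasDerivAt_lx (N := N) ht0).continuousAt
    refine (h1.div (by fun_prop) (by positivity)).add (continuousAt_const.div (by fun_prop) (by positivity))
  have hI : IntegrableOn (fun t => kap1 (lx N t) / (N * t) + B / (N ^ 2 * t))
      (Set.Icc (Real.exp (-N) / 2) (1 / 2)) := hcont.integrableOn_Icc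
  refine ⟨(integrable_indicator_iff measurableSet_Icc).2 hI, ?_⟩
  unfold qf
  rw [integral_indicator measurableSet_Icc, integral_Icc_eq_integral_Ioc,
    ← intervalIntegral.integral_of_le hle,
    intervalIntegral.integral_eq_sub_of_hasDerivAt
      (f := fun t => Real.smoothTransition (lx N t) + B / N ^ 2 * Real.log t)]
  · have e1 : Real.smoothTransition (lx N (1 / 2)) = 1 :=
      Real.smoothTransition.one_of_one_le ((one_le_lx_iff hN (by norm_num)).2 le_rfl)
    have e2 : Real.smoothTransition (lx N (Real.exp (-N) / 2)) = 0 :=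
      Real.smoothTransition.zero_of_nonpos ((lx_le_zero_iff hN hp).2 le_rfl)
    rw [e1, e2, Real.log_div (by positivity) (by norm_num), Real.log_div (by norm_num) (by norm_num),
      Real.log_exp, Real.log_one]
    field_simp
    ring
  · intro t ht
    rw [Set.uIcc_of_le hle] at ht
    have ht0 : 0 < t := hp.trans_le ht.1
    have h := (hasDerivAt_kap (lx N t)).comp t (hasDerivAt_lx (N := N) ht0)
    have h2 := h.add ((Real.hasDerivAt_log ht0.ne').const_mul (B / N ^ 2))
    refine h2.congr_deriv ?_
    field_simp
  · rw [intervalIntegrable_iff_integrableOn_Icc_of_le hle]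
    exact hI

/-- Spatial cutoff. -/
def chi {n : ℕ} (M : ℝ) (y : Eu n) : ℝ := Real.smoothTransition ((4 - ‖y‖ ^ 2 / M ^ 2) / 3)

lemma contDiff_chi {n : ℕ} (M : ℝ) : ContDiff ℝ 4 (chi (n := n) M) := by
  refine contDiff_kap.comp ?_
  exact (contDiff_const.sub ((contDiff_norm_sq ℝ).div_const _)).div_const _

lemma chi_nonneg {n : ℕ} (M : ℝ) (y : Eu n) : 0 ≤ chi M y := Real.smoothTransition.nonneg _
lemma chi_le_one {n : ℕ} (M : ℝ) (y : Eu n) : chi M y ≤ 1 := Real.smoothTransition.le_one _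

lemma chi_one {n : ℕ} {M : ℝ} (hM : 0 < M) {y : Eu n} (hy : ‖y‖ ≤ M) : chi M y = 1 := by
  apply Real.smoothTransition.one_of_one_le
  have : ‖y‖ ^ 2 / M ^ 2 ≤ 1 := by
    rw [div_le_one (by positivity)]; gcongr
  linarith

lemma chi_zero {n : ℕ} {M : ℝ} (hM : 0 < M) {y : Eu n} (hy : 2 * M ≤ ‖y‖) : chi M y = 0 := by
  apply Real.smoothTransition.zero_of_nonpos
  have : 4 ≤ ‖y‖ ^ 2 / M ^ 2 := by
    rw [le_div_iff₀ (by positivity)]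
    nlinarith
  linarith

lemma hasDerivAt_chi1 (M q : ℝ) : HasDerivAt (fun q => Real.smoothTransition ((4 - q / M ^ 2) / 3))
    (-kap1 ((4 - q / M ^ 2) / 3) / (3 * M ^ 2)) q := by
  have h1 : HasDerivAt (fun q => (4 - q / M ^ 2) / 3) (-(1 / M ^ 2) / 3) q :=
    (((hasDerivAt_id q).div_const (M ^ 2)).const_sub 4).div_const 3
  refine ((hasDerivAt_kap _).comp q h1).congr_deriv ?_
  by_cases hM : M = 0
  · simp [hM]
  · field_simp

lemma hasDerivAt_chi2 (M q : ℝ) : HasDerivAt (fun q => -kap1 ((4 - q / M ^ 2) / 3) / (3 * M ^ 2))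
    (kap2 ((4 - q / M ^ 2) / 3) / (9 * M ^ 4)) q := by
  have h1 : HasDerivAt (fun q => (4 - q / M ^ 2) / 3) (-(1 / M ^ 2) / 3) q :=
    (((hasDerivAt_id q).div_const (M ^ 2)).const_sub 4).div_const 3
  refine ((((hasDerivAt_kap1 _).comp q h1).neg).div_const (3 * M ^ 2)).congr_deriv ?_
  by_cases hM : M = 0
  · simp [hM]
  · field_simp
    ring

lemma gradv_chi {n : ℕ} (M : ℝ) (y : Eu n) :
    gradv (chi M) y = (-kap1 ((4 - ‖y‖ ^ 2 / M ^ 2) / 3) / (3 * M ^ 2) * 2) • y := by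
  ext i
  have h := pd_rad i 0 y (g := fun q => Real.smoothTransition ((4 - q / M ^ 2) / 3))
    (hasDerivAt_chi1 M _)
  simp only [sub_zero] at h
  have h' : pd i (chi M) y = _ := h
  simp [gradv, h']
  ring

lemma lap_chi {n : ℕ} (M : ℝ) (y : Eu n) :
    lap (chi M) y = 4 * ‖y‖ ^ 2 * (kap2 ((4 - ‖y‖ ^ 2 / M ^ 2) / 3) / (9 * M ^ 4))
      + 2 * n * (-kap1 ((4 - ‖y‖ ^ 2 / M ^ 2) / 3) / (3 * M ^ 2)) := by
  have h := lap_rad 0 y (g := fun q => Real.smoothTransition ((4 - q / M ^ 2) / 3))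
    (Eventually.of_forall fun q => hasDerivAt_chi1 M q) (hasDerivAt_chi2 M _)
  simp only [sub_zero] at h
  exact h

lemma chi_deriv_near {n : ℕ} {M : ℝ} (hM : 0 < M) {y : Eu n} (hy : ‖y‖ < M) :
    gradv (chi M) y = 0 ∧ lap (chi M) y = 0 := by
  have : 1 < (4 - ‖y‖ ^ 2 / M ^ 2) / 3 := by
    have : ‖y‖ ^ 2 / M ^ 2 < 1 := by
      rw [div_lt_one (by positivity)]; gcongr
    linarith
  rw [gradv_chi, lap_chi, kap1_big this, kap2_big this]
  simp

lemma chi_deriv_bound {n : ℕ} {M B : ℝ} (hM : 0 < M) (hB0 : 0 ≤ B)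
    (hB : ∀ x, |kap1 x| ≤ B ∧ |kap2 x| ≤ B) {y : Eu n} (hy : ‖y‖ ≤ 2 * M) :
    ‖gradv (chi M) y‖ ≤ 2 * B / M ∧ |lap (chi M) y| ≤ (2 + n) * B / M ^ 2 := by
  set x := (4 - ‖y‖ ^ 2 / M ^ 2) / 3 with hx
  obtain ⟨h1, h2⟩ := hB x
  constructor
  · rw [gradv_chi, norm_smul, Real.norm_eq_abs, abs_mul, abs_div, abs_neg,
      abs_of_pos (by positivity : (0:ℝ) < 3 * M ^ 2), abs_two]
    calc _ ≤ B / (3 * M ^ 2) * 2 * (2 * M) := by gcongr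
      _ ≤ 2 * B / M := by
        rw [show B / (3 * M ^ 2) * 2 * (2 * M) = (4 * B / 3) / M by field_simp; ring]
        gcongr
        linarith
  · rw [lap_chi]
    calc _ ≤ |4 * ‖y‖ ^ 2 * (kap2 x / (9 * M ^ 4))| + |2 * n * (-kap1 x / (3 * M ^ 2))| := abs_add_le _ _
      _ = 4 * ‖y‖ ^ 2 * (|kap2 x| / (9 * M ^ 4)) + 2 * n * (|kap1 x| / (3 * M ^ 2)) := by
        rw [abs_mul (4 * ‖y‖ ^ 2), abs_mul (2 * (n:ℝ)), abs_div, abs_div, abs_neg, abs_of_pos (by positivity : (0:ℝ) < 3 * M ^ 2),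
          abs_of_pos (by positivity : (0:ℝ) < 9 * M ^ 4), abs_of_nonneg (by positivity : (0:ℝ) ≤ 4 * ‖y‖ ^ 2),
          abs_of_nonneg (by positivity : (0:ℝ) ≤ 2 * n)]
      _ ≤ 4 * (2 * M) ^ 2 * (B / (9 * M ^ 4)) + 2 * n * (B / (3 * M ^ 2)) := by gcongr
      _ = (16 / 9 + 2 * n / 3) * B / M ^ 2 := by field_simp; ring
      _ ≤ _ := by
        have : (0:ℝ) ≤ n := by positivity
        gcongr <;> linarith

/-- The cutoff. -/
def cut {n : ℕ} (ν : Eu n) (N M : ℝ) (y : Eu n) : ℝ := zeta N ⟪ν, y⟫ * chi M y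

lemma contDiff_zeta_lin {n : ℕ} (ν : Eu n) {N : ℝ} (hN : 0 < N) :
    ContDiff ℝ 4 (fun y : Eu n => zeta N ⟪ν, y⟫) :=
  (contDiff_zeta hN).comp (contDiff_const.inner ℝ contDiff_id)

lemma contDiff_cut {n : ℕ} (ν : Eu n) {N M : ℝ} (hN : 0 < N) : ContDiff ℝ 4 (cut ν N M) :=
  (contDiff_zeta_lin ν hN).mul (contDiff_chi M)

lemma tsupport_cut {n : ℕ} (ν : Eu n) {N M : ℝ} (hN : 0 < N) (hM : 0 < M) :
    tsupport (cut ν N M) ⊆ {y | Real.exp (-N) / 2 ≤ ⟪ν, y⟫} ∩ closedBall 0 (2 * M) := by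
  apply closure_minimal
  · intro y hy
    constructor
    · by_contra h
      exact hy (by rw [cut, zeta_zero hN (not_le.1 h).le, zero_mul])
    · rw [mem_closedBall_zero_iff]
      by_contra h
      exact hy (by rw [cut, chi_zero hM (not_le.1 h).le, mul_zero])
  · exact (isClosed_le continuous_const (by fun_prop)).inter isClosed_closedBall

lemma pd_zeta {n : ℕ} (i : Fin n) (ν : Eu n) {N : ℝ} {y : Eu n} (hy : 0 < ⟪ν, y⟫) :
    pd i (fun y => zeta N ⟪ν, y⟫) y = zeta1 N ⟪ν, y⟫ * ν i := by
  have h2 : HasFDerivAt (fun z : Eu n => ⟪ν, z⟫) (innerSL ℝ ν) y := (innerSL ℝ ν).hasFDerivAt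
  have h3 := (hasDerivAt_zeta (N := N) hy).comp_hasFDerivAt y h2
  unfold pd
  have h4 : HasFDerivAt (fun y => zeta N ⟪ν, y⟫) _ y := h3
  rw [h4.fderiv]
  simp [EuclideanSpace.inner_single_right]

lemma lap_zeta {n : ℕ} (ν : Eu n) (hν : ‖ν‖ = 1) {N : ℝ} (hN : 0 < N) {y : Eu n}
    (hy : 0 < ⟪ν, y⟫) : lap (fun y => zeta N ⟪ν, y⟫) y = zeta2 N ⟪ν, y⟫ := by
  have h2 : HasFDerivAt (fun z : Eu n => ⟪ν, z⟫) (innerSL ℝ ν) y := (innerSL ℝ ν).hasFDerivAt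
  have h3 := (hasDerivAt_zeta1 hN hy).comp_hasFDerivAt y h2
  have key : ∀ i, pd i (pd i (fun y => zeta N ⟪ν, y⟫)) y = zeta2 N ⟪ν, y⟫ * (ν i) ^ 2 := by
    intro i
    have e : pd i (fun y => zeta N ⟪ν, y⟫) =ᶠ[nhds y] fun y => zeta1 N ⟪ν, y⟫ * ν i := by
      have : ∀ᶠ z in nhds y, 0 < ⟪ν, z⟫ :=
        (h2.continuousAt).eventually (Ioi_mem_nhds hy)
      filter_upwards [this] with z hz
      exact pd_zeta i ν hz
    rw [pd_congr i e]
    have h4 : HasFDerivAt (fun y => zeta1 N ⟪ν, y⟫ * ν i) _ y := h3.mul_const (ν i)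
    unfold pd
    rw [h4.fderiv]
    simp [EuclideanSpace.inner_single_right]
    ring
  unfold lap
  simp_rw [key]
  rw [← Finset.mul_sum, ← EuclideanSpace.real_norm_sq_eq, hν]
  simp

lemma gradv_cut {n : ℕ} (ν : Eu n) {N M : ℝ} (hN : 0 < N) {y : Eu n}
    (hy : 0 < ⟪ν, y⟫) : gradv (cut ν N M) y
      = (chi M y * zeta1 N ⟪ν, y⟫) • ν + zeta N ⟪ν, y⟫ • gradv (chi M) y := by
  ext i
  have := pd_mul i (f := fun y => zeta N ⟪ν, y⟫) (g := chi M) (y := y)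
    ((contDiff_zeta_lin ν hN).differentiable (by norm_num) y)
    ((contDiff_chi M).differentiable (by norm_num) y)
  rw [pd_zeta i ν hy] at this
  have h' : pd i (cut ν N M) y = _ := this
  simp [gradv, h']
  ring

lemma lap_cut {n : ℕ} (ν : Eu n) (hν : ‖ν‖ = 1) {N M : ℝ} (hN : 0 < N) {y : Eu n}
    (hy : 0 < ⟪ν, y⟫) : lap (cut ν N M) y
      = chi M y * zeta2 N ⟪ν, y⟫ + 2 * zeta1 N ⟪ν, y⟫ * ⟪ν, gradv (chi M) y⟫
        + zeta N ⟪ν, y⟫ * lap (chi M) y := by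
  have := lap_mul (f := fun y => zeta N ⟪ν, y⟫) (g := chi M) (y := y)
    ((contDiff_zeta_lin ν hN).contDiffAt.of_le (by norm_num))
    ((contDiff_chi M).contDiffAt.of_le (by norm_num))
  rw [lap_zeta ν hν hN hy] at this
  have h' : lap (cut ν N M) y = _ := this
  rw [h']
  simp_rw [pd_zeta _ ν hy]
  have e : ⟪ν, gradv (chi M) y⟫ = ∑ i, ν i * pd i (chi M) y := by
    rw [PiLp.inner_apply]
    refine Finset.sum_congr rfl fun i _ => ?_
    simp [gradv, mul_comm]
  rw [e]
  simp_rw [mul_assoc]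
  rw [← Finset.mul_sum]
  ring

lemma Rest_cut {n : ℕ} (ν : Eu n) (hν : ‖ν‖ = 1) {N M : ℝ} (hN : 0 < N) {y : Eu n}
    (hy : 0 < ⟪ν, y⟫) : Rest ν (cut ν N M) y
      = chi M y • ((2 * zeta1 N ⟪ν, y⟫) • dW ν y ν + zeta2 N ⟪ν, y⟫ • Wf ν y)
        + (2 * zeta1 N ⟪ν, y⟫ * ⟪ν, gradv (chi M) y⟫) • Wf ν y
        + zeta N ⟪ν, y⟫ • ((2:ℝ) • dW ν y (gradv (chi M) y) + lap (chi M) y • Wf ν y) := by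
  rw [Rest, gradv_cut ν hN hy, lap_cut ν hν hN hy, map_add, map_smul, map_smul]
  module

lemma far_part {n : ℕ} {ν : Eu n} (hν : ‖ν‖ = 1) {M B : ℝ} (hM : 2 ≤ M) (hB0 : 0 ≤ B)
    (hB : ∀ x, |kap1 x| ≤ B ∧ |kap2 x| ≤ B) {y : Eu n} (hy : ‖y‖ ≤ 2 * M) :
    ‖(2:ℝ) • dW ν y (gradv (chi M) y) + lap (chi M) y • Wf ν y‖
      ≤ (28 * n + 40) * B / M * ((M / 2) ^ 2) ^ (-(n:ℝ) / 2) := by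
  have hM0 : 0 < M := by linarith
  have hP0 : 0 < ((M / 2) ^ 2) ^ (-(n:ℝ) / 2) := by positivity
  by_cases h : ‖y‖ < M
  · obtain ⟨h1, h2⟩ := chi_deriv_near hM0 h
    rw [h1, h2]
    simp
    positivity
  · obtain ⟨b1, b2⟩ := far_bounds hν hM (not_lt.1 h) hy
    obtain ⟨c1, c2⟩ := chi_deriv_bound hM0 hB0 hB hy
    set P := ((M / 2) ^ 2) ^ (-(n:ℝ) / 2) with hP
    calc _ ≤ ‖(2:ℝ) • dW ν y (gradv (chi M) y)‖ + ‖lap (chi M) y • Wf ν y‖ := norm_add_le _ _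
      _ = 2 * ‖dW ν y (gradv (chi M) y)‖ + |lap (chi M) y| * ‖Wf ν y‖ := by
        rw [norm_smul, norm_smul, Real.norm_eq_abs, Real.norm_eq_abs, abs_two]
      _ ≤ 2 * (4 * (n + 1) * P * (2 * B / M)) + (2 + n) * B / M ^ 2 * (12 * M * P) := by
        gcongr
        exact (b1 _).trans (by gcongr)
      _ = _ := by field_simp; ring

lemma near_part {n : ℕ} {ν : Eu n} (hν : ‖ν‖ = 1) {M B C N : ℝ} (hM : 2 ≤ M) (hN : 1 ≤ N)
    (hB0 : 0 ≤ B) (hB : ∀ x, |kap1 x| ≤ B ∧ |kap2 x| ≤ B) (hC : 0 ≤ C) {y : Eu n}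
    (hy0 : Real.exp (-N) / 2 ≤ ⟪ν, y⟫) (hy : ‖y‖ ≤ 2 * M)
    (hCy : 0 < ⟪ν, y⟫ → ⟪ν, y⟫ ≤ 1 / 2 → ‖y‖ ≤ 2 * M →
      ‖dW ν y ν + (2:ℝ) • dV (ν - (y - ⟪ν, y⟫ • ν)) ν‖ ≤ C * ⟪ν, y⟫ ∧
      ‖Wf ν y + (2 * ⟪ν, y⟫) • dV (ν - (y - ⟪ν, y⟫ • ν)) ν‖ ≤ C * ⟪ν, y⟫ ^ 2 ∧
      ‖Wf ν y‖ ≤ C * ⟪ν, y⟫) :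
    ‖chi M y • ((2 * zeta1 N ⟪ν, y⟫) • dW ν y ν + zeta2 N ⟪ν, y⟫ • Wf ν y)‖
        + ‖(2 * zeta1 N ⟪ν, y⟫ * ⟪ν, gradv (chi M) y⟫) • Wf ν y‖
      ≤ qf N B ⟪ν, y⟫ * (2 * Kr n (‖y‖ ^ 2 - ⟪ν, y⟫ ^ 2)) + C * (4 * B + 4 * B ^ 2) / N := by
  have hN0 : 0 < N := by linarith
  have ht : 0 < ⟪ν, y⟫ := lt_of_lt_of_le (by positivity) hy0
  have hνν : ⟪ν, ν⟫ = 1 := by rw [real_inner_self_eq_norm_sq, hν]; norm_num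
  by_cases ht2 : ⟪ν, y⟫ ≤ 1 / 2
  · obtain ⟨h1, h2, h3⟩ := hCy ht ht2 hy
    have hgrad := (chi_deriv_bound (by linarith : 0 < M) hB0 hB hy).1
    have hcs := abs_real_inner_le_norm ν (gradv (chi M) y)
    rw [hν, one_mul] at hcs
    set t : ℝ := ⟪ν, y⟫ with htdef
    have hKr : ‖dV (ν - (y - t • ν)) ν‖ = Kr n (‖y‖ ^ 2 - t ^ 2) := by
      have hcs := abs_real_inner_le_norm ν y
      rw [hν, one_mul, ← htdef, abs_of_pos ht] at hcs
      apply norm_dV_eq _ hν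
      · have e1 : ⟪ν, y - t • ν⟫ = 0 := by
          rw [inner_sub_right, inner_smul_right, hνν, ← htdef]; ring
        rw [norm_sub_sq_real, e1, norm_sub_sq_real, inner_smul_right, real_inner_comm, ← htdef,
          norm_smul, hν, Real.norm_eq_abs, mul_one, sq_abs]
        ring
      · rw [real_inner_comm, inner_sub_right, inner_sub_right, inner_smul_right, hνν, ← htdef]
        ring
      · nlinarith
    set A := dV (ν - (y - t • ν)) ν with hA
    obtain ⟨k1, k2⟩ := hB (lx N t)
    have hk1 := kap1_nonneg (lx N t)
    have hz1 : 0 ≤ zeta1 N t := by unfold zeta1; positivity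
    have hz1' : zeta1 N t * t ≤ B / N := by
      rw [zeta1, show kap1 (lx N t) / (N * t) * t = kap1 (lx N t) / N by field_simp]
      gcongr
      exact (le_abs_self _).trans k1
    have hz2' : |zeta2 N t| * t ^ 2 ≤ 2 * B / N := by
      rw [← abs_of_pos (by positivity : 0 < t ^ 2), ← abs_mul, zeta2,
        show (kap2 (lx N t) / (N ^ 2 * t ^ 2) - kap1 (lx N t) / (N * t ^ 2)) * t ^ 2
          = kap2 (lx N t) / N ^ 2 - kap1 (lx N t) / N by field_simp]
      calc _ ≤ |kap2 (lx N t) / N ^ 2| + |kap1 (lx N t) / N| := abs_sub _ _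
        _ = |kap2 (lx N t)| / N ^ 2 + |kap1 (lx N t)| / N := by
          rw [abs_div, abs_div, abs_of_pos hN0, abs_of_pos (by positivity : 0 < N ^ 2)]
        _ ≤ B / N + B / N := by
          gcongr
          nlinarith
        _ = _ := by ring
    have hq : |2 * zeta1 N t + t * zeta2 N t| ≤ qf N B t := by
      rw [qf, Set.indicator_of_mem (show t ∈ Set.Icc _ _ from ⟨hy0, ht2⟩)]
      have e : 2 * zeta1 N t + t * zeta2 N t
          = kap1 (lx N t) / (N * t) + kap2 (lx N t) / (N ^ 2 * t) := by
        rw [zeta1, zeta2]; field_simp; ring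
      rw [e]
      refine (abs_add_le _ _).trans ?_
      rw [abs_div, abs_div, abs_of_nonneg hk1, abs_of_pos (by positivity : 0 < N * t),
        abs_of_pos (by positivity : 0 < N ^ 2 * t)]
      gcongr
    have g1 : ‖(2 * zeta1 N t) • dW ν y ν + zeta2 N t • Wf ν y‖
        ≤ qf N B t * (2 * Kr n (‖y‖ ^ 2 - t ^ 2)) + C * (4 * B) / N := by
      have e : (2 * zeta1 N t) • dW ν y ν + zeta2 N t • Wf ν y
          = (2 * zeta1 N t) • (dW ν y ν + (2:ℝ) • A) + zeta2 N t • (Wf ν y + (2 * t) • A)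
            - (2 * (2 * zeta1 N t + t * zeta2 N t)) • A := by module
      rw [e]
      refine (norm_sub_le _ _).trans ?_
      have s1 : ‖(2 * zeta1 N t) • (dW ν y ν + (2:ℝ) • A)‖ ≤ C * (2 * B) / N := by
        rw [norm_smul, Real.norm_of_nonneg (by positivity)]
        calc _ ≤ 2 * zeta1 N t * (C * t) := by gcongr
          _ = 2 * C * (zeta1 N t * t) := by ring
          _ ≤ 2 * C * (B / N) := by gcongr
          _ = _ := by ring
      have s2 : ‖zeta2 N t • (Wf ν y + (2 * t) • A)‖ ≤ C * (2 * B) / N := by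
        rw [norm_smul, Real.norm_eq_abs]
        calc _ ≤ |zeta2 N t| * (C * t ^ 2) := by gcongr
          _ = C * (|zeta2 N t| * t ^ 2) := by ring
          _ ≤ C * (2 * B / N) := by gcongr
          _ = _ := by ring
      have s3 : ‖(2 * (2 * zeta1 N t + t * zeta2 N t)) • A‖
          ≤ qf N B t * (2 * Kr n (‖y‖ ^ 2 - t ^ 2)) := by
        rw [norm_smul, Real.norm_eq_abs, abs_mul, abs_two, ← hKr]
        calc _ ≤ 2 * qf N B t * ‖A‖ := by gcongr
          _ = _ := by ring
      have s4 := norm_add_le ((2 * zeta1 N t) • (dW ν y ν + (2:ℝ) • A))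
        (zeta2 N t • (Wf ν y + (2 * t) • A))
      have : C * (4 * B) / N = C * (2 * B) / N + C * (2 * B) / N := by ring
      linarith
    have g2 : ‖(2 * zeta1 N t * ⟪ν, gradv (chi M) y⟫) • Wf ν y‖ ≤ C * (4 * B ^ 2) / N := by
      rw [norm_smul, Real.norm_eq_abs, abs_mul, abs_of_nonneg (by positivity : 0 ≤ 2 * zeta1 N t)]
      have : ‖gradv (chi M) y‖ ≤ 2 * B := hgrad.trans (div_le_self (by positivity) (by linarith))
      calc _ ≤ 2 * zeta1 N t * (2 * B) * (C * t) := by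
            gcongr
            exact hcs.trans this
        _ = 4 * B * C * (zeta1 N t * t) := by ring
        _ ≤ 4 * B * C * (B / N) := by gcongr
        _ = _ := by ring
    have g3 : ‖chi M y • ((2 * zeta1 N t) • dW ν y ν + zeta2 N t • Wf ν y)‖
        ≤ ‖(2 * zeta1 N t) • dW ν y ν + zeta2 N t • Wf ν y‖ := by
      rw [norm_smul, Real.norm_of_nonneg (chi_nonneg _ _)]
      exact mul_le_of_le_one_left (norm_nonneg _) (chi_le_one _ _)
    have : C * (4 * B + 4 * B ^ 2) / N = C * (4 * B) / N + C * (4 * B ^ 2) / N := by ring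
    linarith
  · have hx : 1 < lx N ⟪ν, y⟫ := not_le.1 fun h => ht2 ((lx_le_one_iff hN0 ht).1 h)
    have z1 : zeta1 N ⟪ν, y⟫ = 0 := by rw [zeta1, kap1_big hx, zero_div]
    have z2 : zeta2 N ⟪ν, y⟫ = 0 := by rw [zeta2, kap1_big hx, kap2_big hx]; simp
    have hq : qf N B ⟪ν, y⟫ = 0 := Set.indicator_of_notMem (fun h => ht2 h.2) _
    rw [z1, z2, hq]
    simp
    positivity

lemma kernel_estimate {k : ℕ} (hk : 1 ≤ k) (ν : Eu (k + 1)) (hν : ‖ν‖ = 1) {ε : ℝ} (hε : 0 < ε) :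
    ∃ m : Eu (k + 1) → ℝ, ContDiff ℝ 2 m ∧ HasCompactSupport m ∧
      (∀ y ∈ tsupport m, 0 < ⟪ν, y⟫) ∧ (∀ y ∈ ball ν (1 / 2), m y = 1) ∧
      ∫ y, ‖Rest ν m y‖ ≤ sphereArea (k + 1) * Dconst (k + 1) + ε := by
  obtain ⟨B, hB0, hB⟩ := exists_kap_bound
  set V : ℝ := (volume : Measure (Eu (k + 1))).real (ball 0 1) with hV
  have hV0 : 0 ≤ V := measureReal_nonneg
  set X : ℝ := (28 * ((k + 1 : ℕ) : ℝ) + 40) * B * 4 ^ (k + 1) * V with hX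
  have hX0 : 0 ≤ X := by positivity
  set M : ℝ := max 2 (2 * X / ε) with hMdef
  have hM : 2 ≤ M := le_max_left _ _
  have hM0 : 0 < M := by linarith
  have hXM : X / M ≤ ε / 2 := by
    have : 2 * X / ε ≤ M := le_max_right _ _
    rw [div_le_iff₀ hε] at this
    rw [div_le_iff₀ hM0]
    linarith
  obtain ⟨C, hC0, hC⟩ := near_bounds hν (2 * M)
  set S : ℝ := sphereArea (k + 1) * Dconst (k + 1) with hS
  set Y : ℝ := |B * S + C * (4 * B + 4 * B ^ 2) * ((2 * M) ^ (k + 1) * V)| with hY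
  set N : ℝ := max 1 (2 * Y / ε) with hNdef
  have hN : 1 ≤ N := le_max_left _ _
  have hN0 : 0 < N := by linarith
  have hYN : Y / N ≤ ε / 2 := by
    have : 2 * Y / ε ≤ N := le_max_right _ _
    rw [div_le_iff₀ hε] at this
    rw [div_le_iff₀ hN0]
    linarith
  have hts := tsupport_cut ν (N := N) (M := M) hN0 hM0
  refine ⟨cut ν N M, (contDiff_cut ν hN0).of_le (by norm_num), ?_, ?_, ?_, ?_⟩
  · exact (isCompact_closedBall (0 : Eu (k + 1)) (2 * M)).of_isClosed_subset (isClosed_tsupport _)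
      (hts.trans Set.inter_subset_right)
  · intro y hy
    exact lt_of_lt_of_le (by positivity) (hts hy).1
  · intro y hy
    have hd : ‖y - ν‖ < 1 / 2 := by rwa [mem_ball, dist_eq_norm] at hy
    have h1 : 1 / 2 ≤ ⟪ν, y⟫ := by
      have e : ⟪ν, y⟫ = 1 + ⟪ν, y - ν⟫ := by
        rw [inner_sub_right, real_inner_self_eq_norm_sq, hν]; ring
      have h2 := abs_real_inner_le_norm ν (y - ν)
      rw [hν, one_mul] at h2
      have := neg_abs_le ⟪ν, y - ν⟫
      linarith
    have h2 : ‖y‖ ≤ M := by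
      have := norm_add_le (y - ν) ν
      rw [sub_add_cancel, hν] at this
      linarith
    rw [cut, zeta_one hN0 h1, chi_one hM0 h2, mul_one]
  · obtain ⟨hqI, hqe⟩ := qf_integral hN0 B
    obtain ⟨hsI, hse⟩ := integral_slab hk ν hν _ hqI
    set P := ((M / 2) ^ 2) ^ (-((k + 1 : ℕ):ℝ) / 2) with hP
    set E : ℝ := C * (4 * B + 4 * B ^ 2) / N
      + (28 * ((k + 1 : ℕ):ℝ) + 40) * B / M * P with hE
    have hE0 : 0 ≤ E := by positivity
    have hEI : Integrable ((closedBall (0 : Eu (k + 1)) (2 * M)).indicator fun _ => E) :=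
      (integrable_indicator_iff measurableSet_closedBall).2
        (integrableOn_const (measure_closedBall_lt_top).ne)
    have hqn : ∀ t, 0 ≤ qf N B t := by
      intro t
      apply Set.indicator_nonneg
      intro t ht
      have ht0 : 0 < t := lt_of_lt_of_le (by positivity) ht.1
      have := kap1_nonneg (lx N t)
      positivity
    have step : ∫ y, ‖Rest ν (cut ν N M) y‖ ≤ ∫ y,
        (qf N B ⟪ν, y⟫ * (2 * Kr (k + 1) (‖y‖ ^ 2 - ⟪ν, y⟫ ^ 2))
          + (closedBall (0 : Eu (k + 1)) (2 * M)).indicator (fun _ => E) y) := by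
      refine integral_mono_of_nonneg (Eventually.of_forall fun y => norm_nonneg _) (hsI.add hEI)
        (Eventually.of_forall fun y => ?_)
      show ‖Rest ν (cut ν N M) y‖ ≤ qf N B ⟪ν, y⟫ * (2 * Kr (k + 1) (‖y‖ ^ 2 - ⟪ν, y⟫ ^ 2))
          + (closedBall (0 : Eu (k + 1)) (2 * M)).indicator (fun _ => E) y
      by_cases hy : y ∈ tsupport (cut ν N M)
      · obtain ⟨hy1, hy2⟩ := hts hy
        rw [Set.indicator_of_mem hy2]
        rw [mem_closedBall_zero_iff] at hy2
        have ht : 0 < ⟪ν, y⟫ := lt_of_lt_of_le (by positivity) hy1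
        rw [Rest_cut ν hν hN0 ht]
        have n1 := near_part hν hM hN hB0 hB hC0 hy1 hy2 (hC y)
        have n2 := far_part hν hM hB0 hB hy2
        have n3 : ‖zeta N ⟪ν, y⟫ • ((2:ℝ) • dW ν y (gradv (chi M) y) + lap (chi M) y • Wf ν y)‖
            ≤ ‖(2:ℝ) • dW ν y (gradv (chi M) y) + lap (chi M) y • Wf ν y‖ := by
          rw [norm_smul, Real.norm_of_nonneg (zeta_nonneg _ _)]
          exact mul_le_of_le_one_left (norm_nonneg _) (zeta_le_one _ _)
        refine (norm_add₃_le).trans ?_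
        linarith
      · rw [Rest_eq_zero ν hy, norm_zero]
        have hcs := abs_real_inner_le_norm ν y
        rw [hν, one_mul] at hcs
        have h1 : 0 ≤ ‖y‖ ^ 2 - ⟪ν, y⟫ ^ 2 := by
          rw [← sq_abs ⟪ν, y⟫]
          have := abs_nonneg ⟪ν, y⟫
          nlinarith
        have h2 := Kr_nonneg (k + 1) h1
        have h3 := hqn ⟪ν, y⟫
        have h4 : 0 ≤ (closedBall (0 : Eu (k + 1)) (2 * M)).indicator (fun _ => E) y :=
          Set.indicator_nonneg (fun _ _ => hE0) y
        positivity
    refine step.trans ?_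
    rw [integral_add hsI hEI, hse, hqe, integral_indicator measurableSet_closedBall,
      setIntegral_const, smul_eq_mul]
    have hvol : (volume : Measure (Eu (k + 1))).real (closedBall 0 (2 * M))
        = (2 * M) ^ (k + 1) * V := by
      rw [Measure.addHaar_real_closedBall _ _ (by positivity)]
      simp [hV]
    rw [hvol, ← hS]
    have hPM : P * (2 * M) ^ (k + 1) = 4 ^ (k + 1) := by
      have : P = ((M / 2) ^ (k + 1))⁻¹ := by
        rw [hP, ← Real.rpow_natCast (M / 2) 2, ← Real.rpow_mul (by positivity),
          ← Real.rpow_natCast (M / 2) (k + 1), ← Real.rpow_neg (by positivity)]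
        congr 1
        push_cast
        ring
      rw [this, inv_mul_eq_div, ← div_pow]
      congr 1
      field_simp
      norm_num
    have e1 : (2 * M) ^ (k + 1) * V * E
        = C * (4 * B + 4 * B ^ 2) * ((2 * M) ^ (k + 1) * V) / N + X / M := by
      rw [hE, hX, ← hPM]
      ring
    rw [e1]
    have e2 : (1 + B / N) * S + (C * (4 * B + 4 * B ^ 2) * ((2 * M) ^ (k + 1) * V) / N + X / M)
        = S + (B * S + C * (4 * B + 4 * B ^ 2) * ((2 * M) ^ (k + 1) * V)) / N + X / M := by ring
    rw [e2]
    have e3 : (B * S + C * (4 * B + 4 * B ^ 2) * ((2 * M) ^ (k + 1) * V)) / N ≤ Y / N := by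
      gcongr
      exact le_abs_self _
    linarith

lemma pd_scale {n : ℕ} (i : Fin n) (ξ : Eu n) (d : ℝ) {f : Eu n → ℝ} {y : Eu n}
    (hf : DifferentiableAt ℝ f (ξ + d • y)) :
    pd i (fun z => f (ξ + d • z)) y = d * pd i f (ξ + d • y) := by
  have h1 : HasFDerivAt (fun z : Eu n => ξ + d • z) (d • ContinuousLinearMap.id ℝ (Eu n)) y :=
    ((hasFDerivAt_id y).const_smul d).const_add ξ
  have h2 := hf.hasFDerivAt.comp y h1
  unfold pd
  have h3 : HasFDerivAt (fun z => f (ξ + d • z)) _ y := h2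
  rw [h3.fderiv]
  simp

lemma harmonic_scale {n : ℕ} {f : Eu n → ℝ} {Ω U : Set (Eu n)} (hΩ : IsOpen Ω) (hU : IsOpen U)
    (ξ : Eu n) (d : ℝ) (hmap : ∀ y ∈ U, ξ + d • y ∈ Ω) (hf : IsHarmonicOn f Ω) :
    IsHarmonicOn (fun y => f (ξ + d • y)) U := by
  have hat : ∀ y ∈ U, ContDiffAt ℝ 2 f (ξ + d • y) := fun y hy =>
    hf.1.contDiffAt (hΩ.mem_nhds (hmap y hy))
  refine ⟨hf.1.comp (by fun_prop) hmap, fun y hy => ?_⟩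
  have key : ∀ i, pd i (pd i (fun z => f (ξ + d • z))) y = d * (d * pd i (pd i f) (ξ + d • y)) := by
    intro i
    have e : pd i (fun z => f (ξ + d • z)) =ᶠ[nhds y] fun z => d * pd i f (ξ + d • z) := by
      filter_upwards [hU.mem_nhds hy] with z hz
      exact pd_scale i ξ d ((hat z hz).differentiableAt (by norm_num))
    have hd : DifferentiableAt ℝ (pd i f) (ξ + d • y) :=
      (pd_contDiffAt i (k := 1) (hat y hy) (by norm_num)).differentiableAt (by norm_num)
    rw [pd_congr i e]
    have := pd_scale i ξ d (f := fun z => d * pd i f z) (y := y) (hd.const_mul d)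
    rw [this]
    congr 1
    unfold pd at hd ⊢
    rw [fderiv_const_mul hd]
    simp
  have h0 : ∑ i, pd i (pd i f) (ξ + d • y) = 0 := hf.2 _ (hmap y hy)
  show ∑ i, pd i (pd i (fun z => f (ξ + d • z))) y = 0
  simp_rw [key, ← Finset.mul_sum]
  rw [h0]; simp

lemma divg_scale {n : ℕ} {u : Eu n → Eu n} {ξ : Eu n} {d : ℝ} {y : Eu n}
    (hu : ∀ j, DifferentiableAt ℝ (fun z => u z j) (ξ + d • y)) :
    divg (fun z => u (ξ + d • z)) y = d * divg u (ξ + d • y) := by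
  show ∑ j, pd j (fun z => u (ξ + d • z) j) y = d * ∑ j, pd j (fun z => u z j) (ξ + d • y)
  rw [Finset.mul_sum]
  exact Finset.sum_congr rfl fun j _ => pd_scale j ξ d (f := fun z => u z j) (hu j)

lemma compact_in_balls {n : ℕ} (ν : Eu n) (hν : ‖ν‖ = 1) {K : Set (Eu n)} (hK : IsCompact K)
    (hp : ∀ y ∈ K, 0 < ⟪ν, y⟫) :
    ∃ L0 : ℝ, 0 < L0 ∧ ∀ L, L0 < L → K ⊆ ball (L • ν) L := by
  have hc : ContinuousOn (fun y : Eu n => ‖y‖ ^ 2 / (2 * ⟪ν, y⟫)) K := by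
    intro y hy
    apply ContinuousAt.continuousWithinAt
    have := hp y hy
    exact ContinuousAt.div (by fun_prop) (by fun_prop) (by positivity)
  obtain ⟨B, hB⟩ := hK.exists_bound_of_continuousOn hc
  refine ⟨|B| + 1, by positivity, fun L hL y hy => ?_⟩
  have hy0 := hp y hy
  have h := (le_abs_self _).trans ((Real.norm_eq_abs _).symm.le.trans (hB y hy))
  have hL0 : 0 < L := by linarith [abs_nonneg B]
  rw [div_le_iff₀ (by positivity)] at h
  rw [mem_ball, dist_eq_norm, ← sq_lt_sq₀ (norm_nonneg _) hL0.le, norm_sub_sq_real,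
    inner_smul_right, norm_smul, hν, mul_one, Real.norm_eq_abs, sq_abs, real_inner_comm]
  have : B * (2 * ⟪ν, y⟫) < L * (2 * ⟪ν, y⟫) := by
    gcongr
    linarith [le_abs_self B]
  linarith

theorem limsup_divergence_interior_ball
    (n : ℕ) (hn : 2 ≤ n)
    (Ω : Set (Eu n)) (hΩo : IsOpen Ω) (hΩc : IsConnected Ω)
    (c ξ : Eu n) (R : ℝ) (hR : 0 < R)
    (hball : Metric.ball c R ⊆ Ω) (hξs : ξ ∈ Metric.sphere c R) (hξ : ξ ∈ frontier Ω)
    (ε : ℝ) (hε : 0 < ε) :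
    ∃ δ > 0, ∀ t : ℝ, 1 - δ < t → t < 1 →
      ∀ u : Eu n → Eu n, (∀ j : Fin n, IsHarmonicOn (fun y => u y j) Ω) →
        (∀ y ∈ Ω, ‖u y‖ ≤ 1) →
        dist (c + t • (ξ - c)) ξ * |divg u (c + t • (ξ - c))| ≤ Dconst n + ε := by
  obtain ⟨k, rfl⟩ : ∃ k, n = k + 1 := ⟨n - 1, by omega⟩
  have hω : 0 < sphereArea (k + 1) := sphereArea_pos (by omega)
  set ν : Eu (k + 1) := R⁻¹ • (c - ξ) with hνdef
  have hnorm : ‖c - ξ‖ = R := by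
    rw [← dist_eq_norm, dist_comm]; exact hξs
  have hν : ‖ν‖ = 1 := by
    rw [hνdef, norm_smul, hnorm, Real.norm_of_nonneg (by positivity), inv_mul_cancel₀ hR.ne']
  have hRν : R • ν = c - ξ := by rw [hνdef, smul_smul, mul_inv_cancel₀ hR.ne', one_smul]
  obtain ⟨m, hm, hmc, hmp, hm1, hmI⟩ := kernel_estimate (k := k) (by omega) ν hν (mul_pos hω hε)
  obtain ⟨L0, hL0, hL⟩ := compact_in_balls ν hν hmc hmp
  refine ⟨1 / L0, by positivity, fun t ht ht1 u hu hu1 => ?_⟩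
  have hs : 0 < 1 - t := by linarith
  set d : ℝ := (1 - t) * R with hd
  have hd0 : 0 < d := by positivity
  set L : ℝ := 1 / (1 - t) with hLdef
  have hLL : L0 < L := by
    rw [hLdef, lt_div_iff₀ hs]
    have : 1 - t < 1 / L0 := by linarith
    rw [lt_div_iff₀ hL0] at this
    linarith
  have hdL : d * L = R := by rw [hd, hLdef]; field_simp
  have hx : c + t • (ξ - c) = ξ + d • ν := by
    have : d • ν = (1 - t) • (c - ξ) := by rw [hd, mul_smul, hRν]
    rw [this]; module
  have hmap : ∀ y ∈ ball (L • ν) L, ξ + d • y ∈ Ω := by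
    intro y hy
    apply hball
    rw [mem_ball, dist_eq_norm] at hy ⊢
    have : ξ + d • y - c = d • (y - L • ν) := by
      rw [smul_sub, smul_smul, hdL, hRν]; module
    rw [this, norm_smul, Real.norm_of_nonneg hd0.le, ← hdL]
    gcongr
  have hνm : ν ∈ ball (L • ν) L := hL L hLL (subset_tsupport _ (by
    rw [Function.mem_support, hm1 ν (mem_ball_self (by norm_num))]; norm_num))
  have hrep := repr_bound hn ν hν (ball (L • ν) L) isOpen_ball m hm hmc (hL L hLL) hmp hm1
    (fun y => u (ξ + d • y))
    (fun j => harmonic_scale hΩo isOpen_ball ξ d hmap (hu j)) (fun y hy => hu1 _ (hmap y hy))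
  rw [divg_scale (fun j => ((hu j).1.contDiffAt
    (hΩo.mem_nhds (hmap ν hνm))).differentiableAt (by norm_num)), abs_mul, abs_of_pos hd0] at hrep
  have hdist : dist (c + t • (ξ - c)) ξ = d := by
    rw [hx, dist_eq_norm, add_sub_cancel_left, norm_smul, hν, mul_one, Real.norm_of_nonneg hd0.le]
  rw [hdist, hx]
  have : sphereArea (k + 1) * (d * |divg u (ξ + d • ν)|)
      ≤ sphereArea (k + 1) * (Dconst (k + 1) + ε) := by
    rw [mul_add]; exact hrep.trans hmI
  exact le_of_mul_le_mul_left this hω
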